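/- arXiv:math/0108094 — 6 statements merged into one kernel-verified Lean document; each statement's English description precedes it below -/
import Mathlib

section
/- For every j with 0 ≤ j ≤ n−2 one has D_1 · D_j = j·D_j + D_{j+1} in ℚ[S_n], and moreover D_1 · D_{n−1} = n·D_{n−1}. -/
/-- `D n j` is the element of the group algebra `ℚ[S_n]` given by the sum of all
permutations `ρ` of `{0,…,n-1}` (0-indexed version of `{1,…,n}`) that are strictly
increasing on the last `n - j` positions `{j,…,n-1}` (1-indexed: `{j+1,…,n}`).
In particular `D n 0 = 1`.  Under Bidigare's anti-isomorphism these are the images of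
the type `A_{n-1}` side-shuffle (random-to-top) elements `σ_j`. -/
noncomputable def D (n j : ℕ) : MonoidAlgebra ℚ (Equiv.Perm (Fin n)) :=
  ∑ ρ : Equiv.Perm (Fin n),
    if ∀ i i' : Fin n, j ≤ (i : ℕ) → i < i' → ρ i < ρ i'
    then MonoidAlgebra.of ℚ (Equiv.Perm (Fin n)) ρ else 0

/-!
A permutation increasing on all positions but the first is the inverse of a cycle
`Fin.cycleRange a`, so the coefficient of `π` in `D_1 · D_j` counts the values `a` for which
`Fin.cycleRange a * π` is increasing on the last `n - j` positions.  Write `a = π k`.  Passing from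
`π` to `Fin.cycleRange (π k) * π` replaces the value at position `k` by the smallest one and keeps
the relative order of all other values.  Hence each of the `j` positions `k` outside the tail
contributes exactly when `π` is increasing on the tail, the first position of the tail contributes
exactly when `π` is increasing on the rest of the tail, and no other position contributes.
-/

open Finset Equiv

variable {n : ℕ}

theorem strictMonoOn_cycleRange (a : Fin n) : StrictMonoOn a.cycleRange {a}ᶜ := by
  obtain _ | n := n
  · exact a.elim0
  intro x hx y hy hxy
  obtain ⟨x, rfl⟩ := Fin.exists_succAbove_eq hx
  obtain ⟨y, rfl⟩ := Fin.exists_succAbove_eq hy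
  simpa only [Fin.cycleRange_succAbove, Fin.succ_lt_succ_iff, Fin.succAbove_lt_succAbove_iff]
    using hxy

theorem cycleRange_mul_apply_lt_iff (π : Perm (Fin n)) {k x y : Fin n} (hx : x ≠ k) (hy : y ≠ k) :
    ((π k).cycleRange * π) x < ((π k).cycleRange * π) y ↔ π x < π y :=
  (strictMonoOn_cycleRange (π k)).lt_iff_lt (π.injective.ne hx) (π.injective.ne hy)

theorem strictMonoOn_cycleRange_mul_iff (π : Perm (Fin n)) (k : Fin n) (s : Set (Fin n)) :
    StrictMonoOn ((π k).cycleRange * π) s ↔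
      StrictMonoOn π (s \ {k}) ∧ (k ∈ s → k ∈ lowerBounds s) := by
  have : NeZero n := ⟨k.pos.ne'⟩
  have apply_self : ((π k).cycleRange * π) k = 0 := Fin.cycleRange_self (π k)
  refine ⟨fun h => ⟨fun x hx y hy hxy => ?_, fun hk x hx => ?_⟩, fun ⟨h, hk⟩ x hx y hy hxy => ?_⟩
  · exact (cycleRange_mul_apply_lt_iff π hx.2 hy.2).1 (h hx.1 hy.1 hxy)
  · exact (h.le_iff_le hk hx).1 (apply_self.trans_le (Fin.zero_le _))
  · have y_ne : y ≠ k := by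
      rintro rfl
      exact (hk hy hx).not_gt hxy
    obtain rfl | x_ne := eq_or_ne x k
    · rw [apply_self, Fin.pos_iff_ne_zero, ← apply_self]
      exact (Equiv.injective _).ne y_ne
    · exact (cycleRange_mul_apply_lt_iff π x_ne y_ne).2 (h ⟨hx, x_ne⟩ ⟨hy, y_ne⟩ hxy)

theorem strictMonoOn_Ioi_zero_iff [NeZero n] (ρ : Perm (Fin n)) :
    StrictMonoOn ρ (Set.Ioi 0) ↔ (ρ 0).cycleRange⁻¹ = ρ := by
  have univ_diff : (Set.univ : Set (Fin n)) \ {0} = Set.Ioi 0 := by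
    ext x
    simp [Fin.pos_iff_ne_zero]
  have zero_mem : (0 : Fin n) ∈ lowerBounds Set.univ := fun x _ => Fin.zero_le x
  calc StrictMonoOn ρ (Set.Ioi 0)
      ↔ StrictMonoOn ((ρ 0).cycleRange * ρ) Set.univ := by
        rw [strictMonoOn_cycleRange_mul_iff, univ_diff]
        exact (and_iff_left fun _ => zero_mem).symm
    _ ↔ (ρ 0).cycleRange * ρ = 1 := by
        rw [strictMonoOn_univ, ← Perm.monotone_iff]
        exact ⟨StrictMono.monotone, fun h => h.strictMono_of_injective (Equiv.injective _)⟩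
    _ ↔ (ρ 0).cycleRange⁻¹ = ρ := mul_eq_one_iff_inv_eq

section IncreasingSum

variable (R : Type*) [Semiring R]

open scoped Classical in
/-- The sum in `R[S_n]` of the permutations that are strictly increasing on the set of positions
`s`.  The element `D n j` is the case where `R` is `ℚ` and `s` is `{j, …, n - 1}`. -/
noncomputable def increasingSum (s : Finset (Fin n)) : MonoidAlgebra R (Perm (Fin n)) :=
  ∑ ρ ∈ {ρ : Perm (Fin n) | StrictMonoOn ρ s}, MonoidAlgebra.of R (Perm (Fin n)) ρ

theorem increasingSum_of_subsingleton {s : Finset (Fin n)} (hs : (s : Set (Fin n)).Subsingleton) :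
    increasingSum R s = ∑ ρ, MonoidAlgebra.of R (Perm (Fin n)) ρ := by
  rw [increasingSum, filter_true_of_mem fun ρ : Perm (Fin n) => fun _ => hs.strictMonoOn ρ]

theorem increasingSum_Ioi_zero [NeZero n] :
    increasingSum R (Ioi (0 : Fin n)) =
      ∑ a : Fin n, MonoidAlgebra.of R (Perm (Fin n)) a.cycleRange⁻¹ := by
  have inv_apply_zero (a : Fin n) : a.cycleRange⁻¹ 0 = a := Fin.cycleRange_symm_zero a
  simp only [increasingSum, coe_Ioi, strictMonoOn_Ioi_zero_iff]
  refine sum_bij' (fun ρ _ => ρ 0) (fun a _ => a.cycleRange⁻¹) ?_ ?_ ?_ ?_ ?_ <;>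
    simp +contextual [inv_apply_zero]

open scoped Classical in
theorem of_inv_mul_increasingSum (g : Perm (Fin n)) (s : Finset (Fin n)) :
    MonoidAlgebra.of R (Perm (Fin n)) g⁻¹ * increasingSum R s =
      ∑ π ∈ {π : Perm (Fin n) | StrictMonoOn (g * π) s}, MonoidAlgebra.of R (Perm (Fin n)) π := by
  simp only [increasingSum, sum_filter, mul_sum, mul_ite, mul_zero, ← map_mul]
  refine (Fintype.sum_equiv (Equiv.mulLeft g) _ _ fun π => ?_).symm
  simp only [coe_mulLeft, inv_mul_cancel_left]

open scoped Classical in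
theorem sum_ite_strictMonoOn_cycleRange_mul {M : Type*} [AddCommMonoid M] {s : Finset (Fin n)}
    {a : Fin n} (ha : IsLeast (s : Set (Fin n)) a) (π : Perm (Fin n)) (x : M) :
    (∑ k, if StrictMonoOn ((π k).cycleRange * π) s then x else 0) =
      #sᶜ • (if StrictMonoOn π s then x else 0) +
        if StrictMonoOn π (s.erase a) then x else 0 := by
  have of_mem_compl : ∀ k ∈ sᶜ,
      (StrictMonoOn ((π k).cycleRange * π) s ↔ StrictMonoOn π s) := by
    intro k hk
    rw [mem_compl] at hk
    rw [strictMonoOn_cycleRange_mul_iff, Set.sdiff_singleton_eq_self (mod_cast hk)]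
    exact and_iff_left fun h => (hk h).elim
  have of_mem : ∀ k ∈ s, (StrictMonoOn ((π k).cycleRange * π) s ↔
      k = a ∧ StrictMonoOn π (s.erase a)) := by
    intro k hk
    have isLeast_iff : (k ∈ (s : Set (Fin n)) → k ∈ lowerBounds (s : Set (Fin n))) ↔ k = a :=
      ⟨fun h => IsLeast.unique ⟨hk, h hk⟩ ha, fun h _ => h ▸ ha.2⟩
    rw [strictMonoOn_cycleRange_mul_iff, isLeast_iff, and_comm, coe_erase]
    exact and_congr_right fun h => by rw [h]
  rw [← sum_compl_add_sum s]
  congr 1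
  · rw [← sum_const]
    exact sum_congr rfl fun k hk => by simp only [of_mem_compl k hk]
  · rw [sum_congr rfl fun k hk => by rw [if_congr (of_mem k hk) rfl rfl, ite_and],
      sum_ite_eq', if_pos (mem_coe.1 ha.1)]

theorem stmt_1_general [NeZero n] {s : Finset (Fin n)} {a : Fin n}
    (ha : IsLeast (s : Set (Fin n)) a) :
    increasingSum R (Ioi 0) * increasingSum R s =
      #sᶜ • increasingSum R s + increasingSum R (s.erase a) := by
  classical
  calc increasingSum R (Ioi 0) * increasingSum R s
      = ∑ b : Fin n, ∑ π : Perm (Fin n),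
          if StrictMonoOn (b.cycleRange * π) s then MonoidAlgebra.of R _ π else 0 := by
        simp only [increasingSum_Ioi_zero, sum_mul, of_inv_mul_increasingSum, sum_filter]
    _ = ∑ π : Perm (Fin n), ∑ k : Fin n,
          if StrictMonoOn ((π k).cycleRange * π) s then MonoidAlgebra.of R _ π else 0 := by
        rw [sum_comm]
        exact sum_congr rfl fun π _ => (Equiv.sum_comp π _).symm
    _ = #sᶜ • increasingSum R s + increasingSum R (s.erase a) := by
        simp only [sum_ite_strictMonoOn_cycleRange_mul ha, sum_add_distrib, ← smul_sum,
          increasingSum, sum_filter]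

end IncreasingSum

theorem D_eq_increasingSum {j : ℕ} {s : Finset (Fin n)} (hs : ∀ i, i ∈ s ↔ j ≤ (i : ℕ)) :
    D n j = increasingSum ℚ s := by
  have strictMonoOn_iff (ρ : Perm (Fin n)) :
      (∀ i i' : Fin n, j ≤ (i : ℕ) → i < i' → ρ i < ρ i') ↔ StrictMonoOn ρ s := by
    simp only [StrictMonoOn, mem_coe, hs]
    exact ⟨fun h i hi i' _ => h i i' hi, fun h i i' hi hlt => h hi (hi.trans hlt.le) hlt⟩
  simp only [D, increasingSum, sum_filter, strictMonoOn_iff]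

theorem D_one_mul_D {j : ℕ} (hj : j < n) : D n 1 * D n j = (j : ℚ) • D n j + D n (j + 1) := by
  have : NeZero n := ⟨hj.ne_bot⟩
  have D_one : D n 1 = increasingSum ℚ (Ioi 0) := D_eq_increasingSum fun i => by
    rw [mem_Ioi, Fin.lt_def, Fin.val_zero, Nat.succ_le_iff]
  have D_j : D n j = increasingSum ℚ (Ici ⟨j, hj⟩) := D_eq_increasingSum fun i => mem_Ici
  have D_succ : D n (j + 1) = increasingSum ℚ ((Ici ⟨j, hj⟩).erase ⟨j, hj⟩) := by
    rw [Ici_erase]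
    exact D_eq_increasingSum fun i => mem_Ioi
  have card_compl_Ici : #(Ici (⟨j, hj⟩ : Fin n))ᶜ = j := by
    rw [card_compl, Fin.card_Ici, Fintype.card_fin, Nat.sub_sub_self hj.le]
  have isLeast : IsLeast (Ici (⟨j, hj⟩ : Fin n) : Set (Fin n)) ⟨j, hj⟩ := by
    rw [coe_Ici]
    exact isLeast_Ici
  rw [D_one, D_j, D_succ, stmt_1_general ℚ isLeast, card_compl_Ici, Nat.cast_smul_eq_nsmul]

theorem D_eq_sum_of_le_succ {j : ℕ} (hj : n ≤ j + 1) :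
    D n j = ∑ ρ, MonoidAlgebra.of ℚ (Perm (Fin n)) ρ := by
  rw [D_eq_increasingSum (s := {i | j ≤ (i : ℕ)}) fun i => mem_filter_univ i]
  refine increasingSum_of_subsingleton ℚ fun i hi i' hi' => Fin.ext ?_
  rw [mem_coe, mem_filter_univ] at hi hi'
  omega

/-- For `0 ≤ j ≤ n-2`, `D_1 · D_j = j·D_j + D_{j+1}`, and `D_1 · D_{n-1} = n·D_{n-1}`. -/
theorem stmt_1 (n : ℕ) (hn : 2 ≤ n) :
    (∀ j : ℕ, j ≤ n - 2 →
      D n 1 * D n j = (j : ℚ) • D n j + D n (j + 1)) ∧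
    D n 1 * D n (n - 1) = (n : ℚ) • D n (n - 1) := by
  refine ⟨fun j hj => D_one_mul_D (by omega), ?_⟩
  have D_last : D n (n - 1 + 1) = D n (n - 1) := by
    rw [D_eq_sum_of_le_succ (by omega), D_eq_sum_of_le_succ (by omega)]
  rw [D_one_mul_D (by omega), D_last, Nat.cast_pred (by omega), sub_smul, one_smul, sub_add_cancel]
end

section
/- The random-to-top element D_1 satisfies the polynomial relation D_1·(D_1 − 1)·(D_1 − 2)···(D_1 − (n−2))·(D_1 − n) = 0 in ℚ[S_n]; that is, the product over the factors (D_1 − m) for m ∈ {0,1,…,n−2,n} vanishes (note the factor (D_1 − (n−1)) is absent). -/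
/-!
Read a permutation as a word and let `a_j` be the sum of the words that increase from position `j`
on. Multiplying by `a_1` on the right sums over all ways of moving one letter, at position `k`, to
the front. If `k < j`, the increasing tail is untouched and the words summed in `a_j` are merely
permuted. The moves with `k ≥ j` produce every word summed in `a_{j+1}` exactly once, because such
a word is determined by its first `j + 1` letters. Hence `a_j * a_1 = j • a_j + a_{j+1}`, so
`a_j = a_1 * (a_1 - 1) * ⋯ * (a_1 - (j - 1))`. Since `a_{n-1} = a_n`, this yields
`a_{n-1} * (a_1 - n) = a_{n-1} * (a_1 - (n - 1)) - a_{n-1} = a_n - a_{n-1} = 0`.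
-/

section Rearrangement

variable {α β : Type*} [LinearOrder α]

theorem equiv_eq_of_strictMonoOn_of_eqOn_compl [WellFoundedLT α] [PartialOrder β] {e f : α ≃ β}
    {s : Set α} (he : StrictMonoOn e s) (hf : StrictMonoOn f s) (hcompl : Set.EqOn e f sᶜ) :
    e = f := by
  have image_eq : e '' s = f '' s := by
    rw [← compl_inj_iff, ← Set.image_compl_eq e.bijective, ← Set.image_compl_eq f.bijective,
      hcompl.image_eq]
  have restrict_eq : s.domRestrict e = s.domRestrict f := by
    rw [← StrictMono.range_inj he.domRestrict hf.domRestrict, Set.range_domRestrict,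
      Set.range_domRestrict, image_eq]
  ext i
  by_cases hi : i ∈ s
  · exact congrFun restrict_eq ⟨i, hi⟩
  · exact hcompl hi

theorem exists_equiv_strictMonoOn_eqOn_compl [Finite α] [LinearOrder β] (e : α ≃ β) (s : Set α) :
    ∃ f : α ≃ β, StrictMonoOn f s ∧ Set.EqOn f e sᶜ := by
  classical
  have := Fintype.ofFinite α
  let sorted : s ≃o e '' s := (Fintype.orderIsoFinOfCardEq s rfl).symm.trans
    (Fintype.orderIsoFinOfCardEq _ (Fintype.card_congr (e.image s)).symm)
  let rearrange : Equiv.Perm s := sorted.toEquiv.trans (e.image s).symm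
  have e_rearrange (i : s) : e (rearrange i) = sorted i :=
    congrArg Subtype.val ((e.image s).apply_symm_apply (sorted i))
  refine ⟨(Equiv.Perm.ofSubtype rearrange).trans e, fun i hi i' hi' hlt => ?_, fun i hi => ?_⟩
  · rw [Equiv.trans_apply, Equiv.trans_apply, Equiv.Perm.ofSubtype_apply_of_mem _ hi,
      Equiv.Perm.ofSubtype_apply_of_mem _ hi', e_rearrange, e_rearrange]
    exact sorted.strictMono hlt
  · rw [Equiv.trans_apply, Equiv.Perm.ofSubtype_apply_of_not_mem _ hi]

end Rearrangement

/-- The permutations of `Fin n` whose one-line notation increases from position `j` on. -/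
noncomputable def tailIncreasing (n j : ℕ) : Finset (Equiv.Perm (Fin n)) :=
  open Classical in {ρ | StrictMonoOn ρ {i | j ≤ (i : ℕ)}}

theorem mem_tailIncreasing {n j : ℕ} {ρ : Equiv.Perm (Fin n)} :
    ρ ∈ tailIncreasing n j ↔ StrictMonoOn ρ {i | j ≤ (i : ℕ)} := by
  simp [tailIncreasing]

theorem tailIncreasing_zero (n : ℕ) : tailIncreasing n 0 = {1} := by
  ext ρ
  simp only [mem_tailIncreasing, Nat.zero_le, Set.ofPred_true, Finset.mem_singleton]
  have one_strictMonoOn : StrictMonoOn (1 : Equiv.Perm (Fin n)) Set.univ :=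
    strictMono_id.strictMonoOn _
  refine ⟨fun hρ => equiv_eq_of_strictMonoOn_of_eqOn_compl hρ one_strictMonoOn ?_, ?_⟩
  · simp
  · rintro rfl
    exact one_strictMonoOn

theorem tailIncreasing_succ_self (n : ℕ) : tailIncreasing (n + 1) n =
    tailIncreasing (n + 1) (n + 1) := by
  ext ρ
  rw [mem_tailIncreasing, mem_tailIncreasing]
  have tail_subsingleton {m : ℕ} (hm : n ≤ m) : {i : Fin (n + 1) | m ≤ (i : ℕ)}.Subsingleton := by
    intro i hi i' hi'
    simp only [Set.mem_ofPred_eq] at hi hi'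
    omega
  exact iff_of_true ((tail_subsingleton le_rfl).strictMonoOn ρ)
    ((tail_subsingleton n.le_succ).strictMonoOn ρ)

theorem mul_mem_tailIncreasing_iff {n j : ℕ} {ρ σ : Equiv.Perm (Fin n)}
    (hσ : ∀ i : Fin n, j ≤ (i : ℕ) → σ i = i) :
    ρ * σ ∈ tailIncreasing n j ↔ ρ ∈ tailIncreasing n j := by
  rw [mem_tailIncreasing, mem_tailIncreasing]
  exact Set.EqOn.congr_strictMonoOn fun i hi => congrArg ρ (hσ i hi)

section MoveToFront

variable {n j : ℕ}

/-- The permutation with one-line notation `k, 0, …, k - 1, k + 1, …, n`. Right multiplication by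
it moves the `k`-th letter of a word to the front. -/
def moveToFront (k : Fin (n + 1)) : Equiv.Perm (Fin (n + 1)) := k.cycleRange.symm

theorem moveToFront_zero (k : Fin (n + 1)) : moveToFront k 0 = k :=
  k.cycleRange_symm_zero

theorem moveToFront_succ (k : Fin (n + 1)) (i : Fin n) : moveToFront k i.succ = k.succAbove i :=
  k.cycleRange_symm_succ i

theorem moveToFront_of_gt {k i : Fin (n + 1)} (h : k < i) : moveToFront k i = i := by
  rw [moveToFront, Equiv.symm_apply_eq, Fin.cycleRange_of_gt h]

theorem moveToFront_succ_of_lt {k : Fin (n + 1)} {i : Fin n} (h : (i : ℕ) < k) :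
    moveToFront k i.succ = i.castSucc := by
  rw [moveToFront_succ, Fin.succAbove_of_castSucc_lt _ _ (Fin.lt_def.2 h)]

theorem mul_moveToFront_mem_tailIncreasing {ρ : Equiv.Perm (Fin (n + 1))}
    (hρ : ρ ∈ tailIncreasing (n + 1) j) (k : Fin (n + 1)) :
    ρ * moveToFront k ∈ tailIncreasing (n + 1) (j + 1) := by
  rw [mem_tailIncreasing] at hρ ⊢
  intro a ha b hb hlt
  obtain ⟨a, rfl⟩ := Fin.exists_succ_eq.2 (show a ≠ 0 by rintro rfl; simp at ha)
  obtain ⟨b, rfl⟩ := Fin.exists_succ_eq.2 (show b ≠ 0 by rintro rfl; simp at hb)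
  have castSucc_le_succAbove (i : Fin n) : i.castSucc ≤ k.succAbove i := by
    grind [Fin.succAbove]
  have le_succAbove (i : Fin n) (hi : j + 1 ≤ (i.succ : ℕ)) : j ≤ (k.succAbove i : ℕ) :=
    (Nat.le_of_succ_le_succ hi).trans (castSucc_le_succAbove i)
  rw [Equiv.Perm.mul_apply, Equiv.Perm.mul_apply, moveToFront_succ, moveToFront_succ]
  exact hρ (le_succAbove a ha) (le_succAbove b hb)
    (Fin.strictMono_succAbove k (Fin.succ_lt_succ_iff.1 hlt))

theorem eq_and_eq_of_mul_moveToFront_eq {ρ ρ' : Equiv.Perm (Fin (n + 1))}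
    (hρ : ρ ∈ tailIncreasing (n + 1) j) (hρ' : ρ' ∈ tailIncreasing (n + 1) j)
    {k k' : Fin (n + 1)} (hk : j ≤ (k : ℕ)) (hk' : j ≤ (k' : ℕ))
    (h : ρ * moveToFront k = ρ' * moveToFront k') : ρ = ρ' ∧ k = k' := by
  have head_eq : Set.EqOn ρ ρ' {i : Fin (n + 1) | j ≤ (i : ℕ)}ᶜ := by
    intro i hi
    obtain ⟨i, rfl⟩ := Fin.exists_castSucc_eq.2
      (show i ≠ Fin.last n by rintro rfl; exact hi (hk.trans k.is_le))
    have hi : (i : ℕ) < j := not_le.1 hi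
    simpa only [Equiv.Perm.mul_apply, moveToFront_succ_of_lt (hi.trans_le hk),
      moveToFront_succ_of_lt (hi.trans_le hk')] using Equiv.congr_fun h i.succ
  obtain rfl : ρ = ρ' := equiv_eq_of_strictMonoOn_of_eqOn_compl
    (mem_tailIncreasing.1 hρ) (mem_tailIncreasing.1 hρ') head_eq
  refine ⟨rfl, ?_⟩
  rw [← moveToFront_zero k, mul_left_cancel h, moveToFront_zero]

theorem exists_mul_moveToFront_eq (hj : j ≤ n) {τ : Equiv.Perm (Fin (n + 1))}
    (hτ : τ ∈ tailIncreasing (n + 1) (j + 1)) :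
    ∃ ρ ∈ tailIncreasing (n + 1) j, ∃ k : Fin (n + 1), j ≤ (k : ℕ) ∧ ρ * moveToFront k = τ := by
  -- `ρ` keeps the letters `τ 1, …, τ j` in front and sorts all the others, among them `τ 0`.
  obtain ⟨ρ, ρ_strictMonoOn, head_eq⟩ := exists_equiv_strictMonoOn_eqOn_compl
    (τ * (moveToFront ⟨j, Nat.lt_succ_of_le hj⟩)⁻¹) {i : Fin (n + 1) | j ≤ (i : ℕ)}
  have ρ_castSucc {i : Fin n} (hi : (i : ℕ) < j) : ρ i.castSucc = τ i.succ := by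
    rw [head_eq (show i.castSucc ∈ _ from not_le.2 hi), Equiv.Perm.mul_apply,
      ← moveToFront_succ_of_lt (k := ⟨j, Nat.lt_succ_of_le hj⟩) hi,
      Equiv.Perm.inv_def, Equiv.symm_apply_apply]
  obtain ⟨k, ρ_k⟩ := ρ.surjective (τ 0)
  have hk : j ≤ (k : ℕ) := by
    by_contra! hlt
    obtain ⟨i, rfl⟩ := Fin.exists_castSucc_eq.2
      (show k ≠ Fin.last n by rintro rfl; exact hlt.not_ge hj)
    exact Fin.succ_ne_zero i (τ.injective ((ρ_castSucc hlt).symm.trans ρ_k))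
  have hρ := mem_tailIncreasing.2 ρ_strictMonoOn
  refine ⟨ρ, hρ, k, hk, equiv_eq_of_strictMonoOn_of_eqOn_compl
    (mem_tailIncreasing.1 (mul_moveToFront_mem_tailIncreasing hρ k)) (mem_tailIncreasing.1 hτ) ?_⟩
  intro i hi
  cases i using Fin.cases with
  | zero => rw [Equiv.Perm.mul_apply, moveToFront_zero, ρ_k]
  | succ i =>
    have hi : (i : ℕ) < j := Nat.lt_of_succ_lt_succ (not_le.1 hi)
    rw [Equiv.Perm.mul_apply, moveToFront_succ_of_lt (hi.trans_le hk), ρ_castSucc hi]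

end MoveToFront

/-- The sum of `tailIncreasing n j` in the group algebra: `D n j` over an arbitrary semiring. -/
noncomputable def tailIncreasingSum (R : Type*) [Semiring R] (n j : ℕ) :
    MonoidAlgebra R (Equiv.Perm (Fin n)) :=
  ∑ ρ ∈ tailIncreasing n j, MonoidAlgebra.of R _ ρ

theorem D_eq_tailIncreasingSum (n j : ℕ) : D n j = tailIncreasingSum ℚ n j := by
  classical
  rw [D, tailIncreasingSum, tailIncreasing, Finset.sum_filter]
  refine Finset.sum_congr rfl fun ρ _ => if_congr ?_ rfl rfl
  exact ⟨fun h i hi i' _ hlt => h i i' hi hlt,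
    fun h i i' hi hlt => h hi (hi.trans hlt.le) hlt⟩

section Semiring

variable (R : Type*) [Semiring R] {n j : ℕ}

theorem tailIncreasingSum_zero (n : ℕ) : tailIncreasingSum R n 0 = 1 := by
  rw [tailIncreasingSum, tailIncreasing_zero, Finset.sum_singleton, map_one]

theorem tailIncreasingSum_mul_of {σ : Equiv.Perm (Fin n)}
    (hσ : ∀ i : Fin n, j ≤ (i : ℕ) → σ i = i) :
    tailIncreasingSum R n j * MonoidAlgebra.of R _ σ = tailIncreasingSum R n j := by
  rw [tailIncreasingSum, Finset.sum_mul]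
  refine Finset.sum_equiv (Equiv.mulRight σ) (fun ρ => ?_) fun ρ _ => (map_mul _ ρ σ).symm
  exact (mul_mem_tailIncreasing_iff hσ).symm

theorem tailIncreasingSum_mul_sum_moveToFront_of_lt (hj : j ≤ n + 1) :
    tailIncreasingSum R (n + 1) j *
        ∑ k : Fin (n + 1) with k.val < j, MonoidAlgebra.of R _ (moveToFront k) =
      j • tailIncreasingSum R (n + 1) j := by
  rw [Finset.mul_sum, Finset.sum_congr rfl (g := fun _ => tailIncreasingSum R (n + 1) j),
    Finset.sum_const, Fin.card_filter_val_lt, min_eq_right hj]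
  intro k hk
  exact tailIncreasingSum_mul_of R fun i hi =>
    moveToFront_of_gt (Fin.lt_def.2 ((Finset.mem_filter.1 hk).2.trans_le hi))

theorem tailIncreasingSum_mul_sum_moveToFront_of_ge (hj : j ≤ n) :
    tailIncreasingSum R (n + 1) j *
        ∑ k : Fin (n + 1) with ¬k.val < j, MonoidAlgebra.of R _ (moveToFront k) =
      tailIncreasingSum R (n + 1) (j + 1) := by
  rw [tailIncreasingSum, tailIncreasingSum, Finset.sum_mul_sum, ← Finset.sum_product']
  refine Finset.sum_nbij (fun p => p.1 * moveToFront p.2) ?_ ?_ ?_ fun p _ => (map_mul _ _ _).symm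
  · rintro ⟨ρ, k⟩ hp
    exact mul_moveToFront_mem_tailIncreasing (Finset.mem_product.1 hp).1 k
  · rintro ⟨ρ, k⟩ hp ⟨ρ', k'⟩ hp' h
    simp only [Finset.coe_product, Set.mem_prod, Finset.mem_coe, Finset.mem_filter_univ, not_lt]
      at hp hp'
    exact Prod.ext_iff.2 (eq_and_eq_of_mul_moveToFront_eq hp.1 hp'.1 hp.2 hp'.2 h)
  · intro τ hτ
    obtain ⟨ρ, hρ, k, hk, rfl⟩ := exists_mul_moveToFront_eq hj hτ
    exact ⟨(ρ, k), by simpa using ⟨hρ, hk⟩, rfl⟩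

theorem tailIncreasingSum_mul_sum_moveToFront (hj : j ≤ n) :
    tailIncreasingSum R (n + 1) j * ∑ k : Fin (n + 1), MonoidAlgebra.of R _ (moveToFront k) =
      j • tailIncreasingSum R (n + 1) j + tailIncreasingSum R (n + 1) (j + 1) := by
  rw [← Finset.sum_filter_add_sum_filter_not _ fun k : Fin (n + 1) => (k : ℕ) < j, mul_add,
    tailIncreasingSum_mul_sum_moveToFront_of_lt R (Nat.le_succ_of_le hj),
    tailIncreasingSum_mul_sum_moveToFront_of_ge R hj]

theorem tailIncreasingSum_one (n : ℕ) :
    tailIncreasingSum R (n + 1) 1 = ∑ k : Fin (n + 1), MonoidAlgebra.of R _ (moveToFront k) := by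
  simpa only [tailIncreasingSum_zero, one_mul, zero_smul, zero_add] using
    (tailIncreasingSum_mul_sum_moveToFront R n.zero_le).symm

end Semiring

section Ring

variable (R : Type*) [Ring R] {n j : ℕ}

theorem tailIncreasingSum_mul_sub_natCast (hj : j ≤ n) :
    tailIncreasingSum R (n + 1) j * (tailIncreasingSum R (n + 1) 1 - j) =
      tailIncreasingSum R (n + 1) (j + 1) := by
  rw [mul_sub, tailIncreasingSum_one, tailIncreasingSum_mul_sum_moveToFront R hj, nsmul_eq_mul,
    Nat.cast_comm, add_sub_cancel_left]

theorem prod_range_tailIncreasingSum_one_sub (hj : j ≤ n + 1) :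
    ((List.range j).map fun m : ℕ => tailIncreasingSum R (n + 1) 1 -
      (m : MonoidAlgebra R (Equiv.Perm (Fin (n + 1))))).prod = tailIncreasingSum R (n + 1) j := by
  induction j with
  | zero => rw [List.range_zero, List.map_nil, List.prod_nil, tailIncreasingSum_zero]
  | succ j ih =>
    rw [List.prod_range_succ, ih (Nat.le_of_succ_le hj),
      tailIncreasingSum_mul_sub_natCast R (Nat.le_of_succ_le_succ hj)]

theorem stmt_3_general (n : ℕ) :
    ((List.range n).map fun m : ℕ => tailIncreasingSum R (n + 1) 1 -
      (m : MonoidAlgebra R (Equiv.Perm (Fin (n + 1))))).prod *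
      (tailIncreasingSum R (n + 1) 1 - ((n + 1 : ℕ) : MonoidAlgebra R _)) = 0 := by
  have last_eq : tailIncreasingSum R (n + 1) n = tailIncreasingSum R (n + 1) (n + 1) := by
    rw [tailIncreasingSum, tailIncreasingSum, tailIncreasing_succ_self]
  rw [prod_range_tailIncreasingSum_one_sub R n.le_succ, Nat.cast_succ, ← sub_sub, mul_sub,
    tailIncreasingSum_mul_sub_natCast R le_rfl, mul_one, last_eq, sub_self]

end Ring

/-- The random-to-top element `D_1` satisfies
`D_1·(D_1 − 1)···(D_1 − (n−2))·(D_1 − n) = 0` in `ℚ[S_n]`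
(the factor `(D_1 − (n−1))` is absent). -/
theorem stmt_3 (n : ℕ) (hn : 2 ≤ n) :
    ((List.range (n - 1)).map
      (fun m => D n 1 - (m : MonoidAlgebra ℚ (Equiv.Perm (Fin n))))).prod *
      (D n 1 - (n : MonoidAlgebra ℚ (Equiv.Perm (Fin n)))) = 0 := by
  obtain ⟨n, rfl⟩ := Nat.exists_eq_add_of_le' (Nat.one_le_of_lt hn)
  -- The statement casts the list `List.range (n - 1)` itself (by a monadic lift), not its entries.
  simpa only [D_eq_tailIncreasingSum, bind_pure_comp, List.map_eq_map, List.map_map,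
    Function.comp_def, Nat.add_sub_cancel] using stmt_3_general ℚ n
end

section
/- The two-sided shuffle element E_1 satisfies the polynomial relation E_1·(E_1 − 2)·(E_1 − 4)···(E_1 − (2n−4))·(E_1 − 2n) = 0 in ℚ[S_n]; that is, the product over the factors (E_1 − 2m) for m ∈ {0,1,…,n−2,n} vanishes (note the factor (E_1 − (2n−2)) is absent). -/
/-- `E1 n` is the two-sided shuffle element of `ℚ[S_n]`: the sum of all permutations
`ρ` of `{0,…,n-1}` (0-indexed version of `{1,…,n}`) that are strictly increasing on
`{1,…,n-1}` (1-indexed: `{2,…,n}`), plus the sum of all permutations strictly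
increasing on `{0,…,n-2}` (1-indexed: `{1,…,n−1}`). -/
noncomputable def E1 (n : ℕ) : MonoidAlgebra ℚ (Equiv.Perm (Fin n)) :=
  (∑ ρ : Equiv.Perm (Fin n),
    if ∀ i i' : Fin n, 1 ≤ (i : ℕ) → i < i' → ρ i < ρ i'
    then MonoidAlgebra.of ℚ (Equiv.Perm (Fin n)) ρ else 0) +
  (∑ ρ : Equiv.Perm (Fin n),
    if ∀ i i' : Fin n, (i' : ℕ) + 1 ≤ n - 1 → i < i' → ρ i < ρ i'
    then MonoidAlgebra.of ℚ (Equiv.Perm (Fin n)) ρ else 0)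

/-!
Read `φ ∈ R[S_n]` as a function of the arrangement `u`, where `u c` is the position of card `c`. Let
`J k` be spanned by the functions that see only the relative order of the cards outside some `k`-set
`S`. Multiplication by a one-sided shuffle sums `φ` over the moves of a card `c` to a fixed end of
the deck. For `c ∈ S` such a move is invisible to `φ`, and these `k` moves contribute `k • φ`; for
`c ∉ S` the card `c` ends up in a known place, so the result sees only the order outside `S ∪ {c}`.
Hence the one-sided shuffle minus `k` maps `J k` into `J (k + 1)`, and so does the combination of
the two one-sided shuffles with weights `a` and `b`, minus `(a + b) * k`. Here `J 0` is everything
and `J (n + 1) = 0`. Moreover `J (n - 1) ≤ J n`, because a single card has no order to be compared: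
this is why the factor for `k = n - 1` is absent.
-/

section ProdMapRange

theorem commute_prod_map_range {M : Type*} [Monoid M] {f : ℕ → M}
    (hf : ∀ i j, Commute (f i) (f j)) (k l : ℕ) : Commute ((List.range k).map f).prod (f l) :=
  Commute.list_prod_left _ _ (by simpa using fun i _ => hf i l)

theorem prod_map_range_smul_mem {M X : Type*} [Monoid M] [MulAction M X] {f : ℕ → M}
    (hf : ∀ i j, Commute (f i) (f j)) {J : ℕ → Set X}
    (hJ : ∀ k, ∀ x ∈ J k, f k • x ∈ J (k + 1)) {x : X} (hx : x ∈ J 0) (k : ℕ) :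
    ((List.range k).map f).prod • x ∈ J k := by
  induction k with
  | zero => simpa using hx
  | succ k ih =>
    rw [List.prod_range_succ, (commute_prod_map_range hf k k).eq, mul_smul]
    exact hJ k _ ih

end ProdMapRange

section OrderFiltration

variable (R : Type*) {α β : Type*}

/-- The maps `u` and `v` put the elements outside `S` in the same relative order. -/
def SameOrderOff [LT β] (S : Finset α) (u v : α → β) : Prop :=
  ∀ a ∉ S, ∀ b ∉ S, (u a < u b ↔ v a < v b)

theorem sameOrderOff_of_card_le [Fintype α] [Preorder β] {S : Finset α}
    (hS : Fintype.card α ≤ S.card + 1) (u v : α → β) : SameOrderOff S u v := by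
  classical
  intro a ha b hb
  have hcompl : Sᶜ.card ≤ 1 := by rw [Finset.card_compl]; omega
  obtain rfl : a = b :=
    Finset.card_le_one.1 hcompl a (Finset.mem_compl.2 ha) b (Finset.mem_compl.2 hb)
  simp only [lt_self_iff_false]

theorem SameOrderOff.eq_of_empty [LinearOrder β] [WellFoundedLT β] {u v : α ≃ β}
    (h : SameOrderOff ∅ u v) : u = v := by
  have hmono : StrictMono (u.symm.trans v) := fun x y hxy => by
    simpa using (h (u.symm x) (by simp) (u.symm y) (by simp)).1 (by simpa using hxy)
  have hrefl : hmono.orderIsoOfSurjective _ (u.symm.trans v).surjective = OrderIso.refl β :=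
    Subsingleton.elim _ _
  ext a
  simpa using (DFunLike.congr_fun hrefl (u a)).symm

variable [Semiring R]

/-- The elements of the group algebra whose coefficient at a permutation depends only on the
relative order in which it puts the elements outside `S`. -/
def orderInvariants [LT α] (S : Finset α) : Submodule R (MonoidAlgebra R (Equiv.Perm α)) where
  carrier := {φ | ∀ u v : Equiv.Perm α, SameOrderOff S u v → φ.coeff u = φ.coeff v}
  zero_mem' := fun _ _ _ => rfl
  add_mem' := fun hφ hψ u v h => congrArg₂ (· + ·) (hφ u v h) (hψ u v h)
  smul_mem' := fun r _ hφ u v h => congrArg (r • ·) (hφ u v h)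

variable (α) in
/-- The decreasing filtration `J k` by the number `k` of ignored elements: it is spanned by the
elements of the group algebra that ignore the position of some `k` elements. -/
noncomputable def orderFiltration [LT α] (k : ℕ) :
    Submodule R (MonoidAlgebra R (Equiv.Perm α)) :=
  ⨆ (S : Finset α) (_ : S.card = k), orderInvariants R S

variable {R}

theorem orderInvariants_le_orderFiltration [LT α] (S : Finset α) :
    orderInvariants R S ≤ orderFiltration R α S.card :=
  le_iSup₂_of_le S rfl le_rfl

theorem orderFiltration_zero [LinearOrder α] [WellFoundedLT α] : orderFiltration R α 0 = ⊤ := by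
  refine top_le_iff.1 (le_trans ?_ (orderInvariants_le_orderFiltration ∅))
  intro φ _ u v h
  rw [h.eq_of_empty]

variable [Fintype α]

theorem orderFiltration_eq_bot [LT α] {k : ℕ} (hk : Fintype.card α < k) :
    orderFiltration R α k = ⊥ :=
  iSup₂_eq_bot.2 fun S hS => absurd S.card_le_univ (by omega)

theorem orderFiltration_le_orderFiltration_card [Preorder α] {k : ℕ}
    (hk : Fintype.card α ≤ k + 1) :
    orderFiltration R α k ≤ orderFiltration R α (Fintype.card α) := by
  refine iSup₂_le fun S hS => le_trans ?_ (orderInvariants_le_orderFiltration Finset.univ)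
  intro φ hφ u v _
  exact hφ u v (sameOrderOff_of_card_le (hS ▸ hk) u v)

end OrderFiltration

section Reinsert

variable {N : ℕ}

/-- The permutation of positions that takes `a` to `p` and keeps all other positions in order. -/
def reinsert (a p : Fin (N + 1)) : Equiv.Perm (Fin (N + 1)) :=
  (finSuccEquiv' a).trans (finSuccEquiv' p).symm

@[simp]
theorem reinsert_apply_self (a p : Fin (N + 1)) : reinsert a p a = p := by
  simp [reinsert]

@[simp]
theorem reinsert_succAbove (a p : Fin (N + 1)) (j : Fin N) :
    reinsert a p (a.succAbove j) = p.succAbove j := by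
  simp [reinsert]

theorem reinsert_inv (a p : Fin (N + 1)) : (reinsert a p)⁻¹ = reinsert p a :=
  rfl

theorem reinsert_injective (a : Fin (N + 1)) : Function.Injective (reinsert a) := fun p q h => by
  simpa using DFunLike.congr_fun h a

theorem reinsert_strictMonoOn (a p : Fin (N + 1)) : StrictMonoOn (reinsert a p) {a}ᶜ := by
  intro x hx y hy hxy
  obtain ⟨i, rfl⟩ := Fin.exists_succAbove_eq hx
  obtain ⟨j, rfl⟩ := Fin.exists_succAbove_eq hy
  simpa [Fin.succAbove_lt_succAbove_iff] using hxy

theorem eq_reinsert_of_strictMonoOn {a : Fin (N + 1)} {ρ : Equiv.Perm (Fin (N + 1))}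
    (hρ : StrictMonoOn ρ {a}ᶜ) : ρ = reinsert a (ρ a) := by
  have hmono : StrictMono (ρ ∘ a.succAbove) := fun i j hij =>
    hρ (Fin.succAbove_ne a i) (Fin.succAbove_ne a j) (Fin.strictMono_succAbove a hij)
  have hcomp : ρ ∘ a.succAbove = (ρ a).succAbove := by
    rw [← hmono.range_inj (Fin.strictMono_succAbove _), Set.range_comp, Fin.range_succAbove,
      Fin.range_succAbove, Set.image_compl_eq ρ.bijective, Set.image_singleton]
  ext1 x
  rcases Fin.eq_self_or_eq_succAbove a x with rfl | ⟨j, rfl⟩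
  · rw [reinsert_apply_self]
  · rw [reinsert_succAbove]
    exact congrFun hcomp j

theorem strictMonoOn_compl_singleton_iff {a : Fin (N + 1)} {ρ : Equiv.Perm (Fin (N + 1))} :
    StrictMonoOn ρ {a}ᶜ ↔ ∃ p, reinsert a p = ρ :=
  ⟨fun hρ => ⟨ρ a, (eq_reinsert_of_strictMonoOn hρ).symm⟩,
    fun ⟨p, hp⟩ => hp ▸ reinsert_strictMonoOn a p⟩

end Reinsert

section MoveCard

variable {N : ℕ}

/-- The arrangement `u`, with `u c` the position of card `c`, after card `c` is moved to
position `p`. -/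
def moveCard (p c : Fin (N + 1)) (u : Equiv.Perm (Fin (N + 1))) : Equiv.Perm (Fin (N + 1)) :=
  reinsert (u c) p * u

theorem moveCard_apply_eq_iff (p c x : Fin (N + 1)) (u : Equiv.Perm (Fin (N + 1))) :
    moveCard p c u x = p ↔ x = c := by
  have hc : moveCard p c u c = p := reinsert_apply_self (u c) p
  rw [← (moveCard p c u).apply_eq_iff_eq (x := x), hc]

theorem sameOrderOff_moveCard {S : Finset (Fin (N + 1))} {c : Fin (N + 1)} (hc : c ∈ S)
    (p : Fin (N + 1)) (u : Equiv.Perm (Fin (N + 1))) : SameOrderOff S (moveCard p c u) u := by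
  have hne : ∀ x ∉ S, u x ∈ ({u c}ᶜ : Set (Fin (N + 1))) := fun x hx hxc =>
    hx (u.injective hxc ▸ hc)
  exact fun a ha b hb => (reinsert_strictMonoOn (u c) p).lt_iff_lt (hne a ha) (hne b hb)

theorem SameOrderOff.moveCard_of_insert {S : Finset (Fin (N + 1))} {c p : Fin (N + 1)}
    (hp : p = 0 ∨ p = Fin.last N) {u v : Equiv.Perm (Fin (N + 1))}
    (h : SameOrderOff (insert c S) u v) : SameOrderOff S (moveCard p c u) (moveCard p c v) := by
  intro a ha b hb
  have hcS : c ∈ insert c S := Finset.mem_insert_self c S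
  by_cases hac : a = c
  · have hfirst : ∀ w, moveCard p c w a < moveCard p c w b ↔ p = 0 ∧ b ≠ c := fun w => by
      rw [(moveCard_apply_eq_iff p c a w).2 hac, ← moveCard_apply_eq_iff p c b w |>.ne]
      grind
    rw [hfirst, hfirst]
  by_cases hbc : b = c
  · have hlast : ∀ w, moveCard p c w a < moveCard p c w b ↔ p = Fin.last N ∧ a ≠ c := fun w => by
      rw [(moveCard_apply_eq_iff p c b w).2 hbc, ← moveCard_apply_eq_iff p c a w |>.ne]
      grind
    rw [hlast, hlast]
  have haS : a ∉ insert c S := by simp [hac, ha]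
  have hbS : b ∉ insert c S := by simp [hbc, hb]
  rw [sameOrderOff_moveCard hcS p u a haS b hbS, sameOrderOff_moveCard hcS p v a haS b hbS]
  exact h a haS b hbS

variable {R : Type*} [Semiring R]

/-- The element of the group algebra whose coefficient at `u` is that of `φ` at the arrangement
obtained from `u` by moving card `c` to position `p`. -/
noncomputable def moveCardPullback (p c : Fin (N + 1))
    (φ : MonoidAlgebra R (Equiv.Perm (Fin (N + 1)))) :
    MonoidAlgebra R (Equiv.Perm (Fin (N + 1))) :=
  MonoidAlgebra.ofCoeff (Finsupp.equivFunOnFinite.symm fun u => φ.coeff (moveCard p c u))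

theorem coeff_moveCardPullback (p c : Fin (N + 1))
    (φ : MonoidAlgebra R (Equiv.Perm (Fin (N + 1)))) (u : Equiv.Perm (Fin (N + 1))) :
    (moveCardPullback p c φ).coeff u = φ.coeff (moveCard p c u) :=
  rfl

variable {S : Finset (Fin (N + 1))} {φ : MonoidAlgebra R (Equiv.Perm (Fin (N + 1)))}

theorem moveCardPullback_eq_self {c : Fin (N + 1)} (hc : c ∈ S) (p : Fin (N + 1))
    (hφ : φ ∈ orderInvariants R S) : moveCardPullback p c φ = φ := by
  ext u
  rw [coeff_moveCardPullback, hφ _ _ (sameOrderOff_moveCard hc p u)]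

theorem moveCardPullback_mem_orderInvariants {p : Fin (N + 1)} (hp : p = 0 ∨ p = Fin.last N)
    (c : Fin (N + 1)) (hφ : φ ∈ orderInvariants R S) :
    moveCardPullback p c φ ∈ orderInvariants R (insert c S) :=
  fun _ _ h => hφ _ _ (h.moveCard_of_insert hp)

end MoveCard

section OneSidedShuffle

variable {N : ℕ} (R : Type*) [Semiring R]

/-- The one-sided shuffle that takes the card in position `p` and reinserts it anywhere: the sum of
all permutations increasing off `p`. -/
noncomputable def oneSidedShuffle (p : Fin (N + 1)) : MonoidAlgebra R (Equiv.Perm (Fin (N + 1))) :=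
  ∑ a, MonoidAlgebra.of R _ (reinsert p a)

theorem sum_ite_eq_oneSidedShuffle (p : Fin (N + 1)) (P : Equiv.Perm (Fin (N + 1)) → Prop)
    [DecidablePred P] (hP : ∀ ρ, P ρ ↔ StrictMonoOn ρ {p}ᶜ) :
    ∑ ρ, (if P ρ then MonoidAlgebra.of R (Equiv.Perm (Fin (N + 1))) ρ else 0) =
      oneSidedShuffle R p := by
  classical
  have himage : Finset.univ.filter P = Finset.univ.image (reinsert p) := by
    ext ρ
    simp [hP, strictMonoOn_compl_singleton_iff]
  rw [← Finset.sum_filter, himage, Finset.sum_image (reinsert_injective p).injOn, oneSidedShuffle]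

variable {R}

theorem oneSidedShuffle_mul (p : Fin (N + 1)) (φ : MonoidAlgebra R (Equiv.Perm (Fin (N + 1)))) :
    oneSidedShuffle R p * φ = ∑ c, moveCardPullback p c φ := by
  ext u
  rw [oneSidedShuffle, Finset.sum_mul, MonoidAlgebra.coeff_sum, MonoidAlgebra.coeff_sum,
    Finset.sum_apply', Finset.sum_apply', ← Equiv.sum_comp u]
  refine Finset.sum_congr rfl fun c _ => ?_
  rw [MonoidAlgebra.of_apply, MonoidAlgebra.coeff_single_mul_apply, one_mul, reinsert_inv,
    coeff_moveCardPullback, moveCard]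

end OneSidedShuffle

section TwoSidedShuffle

/-- The biased form of `E1`: the card at one end of the deck is reinserted anywhere, with weight `a`
for the first position and weight `b` for the last. -/
noncomputable def twoSidedShuffle {R : Type*} [Semiring R] (a b : R) (N : ℕ) :
    MonoidAlgebra R (Equiv.Perm (Fin (N + 1))) :=
  a • oneSidedShuffle R 0 + b • oneSidedShuffle R (Fin.last N)

theorem E1_succ (N : ℕ) : E1 (N + 1) = twoSidedShuffle (1 : ℚ) 1 N := by
  rw [twoSidedShuffle, one_smul, one_smul]
  refine congrArg₂ (· + ·) (sum_ite_eq_oneSidedShuffle ℚ 0 _ fun ρ => ?_)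
    (sum_ite_eq_oneSidedShuffle ℚ (Fin.last N) _ fun ρ => ?_)
  · simp only [StrictMonoOn, Set.mem_compl_singleton_iff]
    grind
  · simp only [StrictMonoOn, Set.mem_compl_singleton_iff]
    grind

variable {R : Type*} [CommRing R] {N : ℕ}

theorem oneSidedShuffle_sub_mul_mem_orderFiltration {p : Fin (N + 1)}
    (hp : p = 0 ∨ p = Fin.last N) {k : ℕ} {φ : MonoidAlgebra R (Equiv.Perm (Fin (N + 1)))}
    (hφ : φ ∈ orderFiltration R (Fin (N + 1)) k) :
    (oneSidedShuffle R p - (k : MonoidAlgebra R (Equiv.Perm (Fin (N + 1))))) * φ ∈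
      orderFiltration R (Fin (N + 1)) (k + 1) := by
  suffices hle : orderFiltration R (Fin (N + 1)) k ≤ (orderFiltration R (Fin (N + 1)) (k + 1)).comap
      (LinearMap.mulLeft R (oneSidedShuffle R p - (k : MonoidAlgebra R _))) from hle hφ
  refine iSup₂_le fun S hS ψ hψ => ?_
  have hsum : (oneSidedShuffle R p - (k : MonoidAlgebra R _)) * ψ =
      ∑ c ∈ Sᶜ, moveCardPullback p c ψ := by
    rw [sub_mul, oneSidedShuffle_mul, ← Finset.sum_add_sum_compl S,
      Finset.sum_congr rfl fun c hc => moveCardPullback_eq_self hc p hψ, Finset.sum_const, hS,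
      nsmul_eq_mul, add_sub_cancel_left]
  rw [Submodule.mem_comap, LinearMap.mulLeft_apply, hsum]
  refine Submodule.sum_mem _ fun c hc => ?_
  have hcard : (insert c S).card = k + 1 := by
    rw [Finset.card_insert_of_notMem (Finset.mem_compl.1 hc), hS]
  exact hcard ▸ orderInvariants_le_orderFiltration (insert c S)
    (moveCardPullback_mem_orderInvariants hp c hψ)

theorem twoSidedShuffle_sub_mul_mem_orderFiltration (a b : R) {k : ℕ}
    {φ : MonoidAlgebra R (Equiv.Perm (Fin (N + 1)))}
    (hφ : φ ∈ orderFiltration R (Fin (N + 1)) k) :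
    (twoSidedShuffle a b N - algebraMap R _ ((a + b) * k)) * φ ∈
      orderFiltration R (Fin (N + 1)) (k + 1) := by
  have hsplit : twoSidedShuffle a b N - algebraMap R _ ((a + b) * k) =
      a • (oneSidedShuffle R 0 - (k : MonoidAlgebra R _)) +
        b • (oneSidedShuffle R (Fin.last N) - (k : MonoidAlgebra R _)) := by
    rw [twoSidedShuffle, map_mul, map_add, map_natCast, add_mul, ← Algebra.smul_def,
      ← Algebra.smul_def, smul_sub, smul_sub, add_sub_add_comm]
  rw [hsplit, add_mul, smul_mul_assoc, smul_mul_assoc]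
  exact add_mem
    (Submodule.smul_mem _ a (oneSidedShuffle_sub_mul_mem_orderFiltration (.inl rfl) hφ))
    (Submodule.smul_mem _ b (oneSidedShuffle_sub_mul_mem_orderFiltration (.inr rfl) hφ))

end TwoSidedShuffle

theorem stmt_8_general {R : Type*} [CommRing R] (a b : R) (N : ℕ) :
    ((List.range N).map fun m : ℕ =>
        twoSidedShuffle a b N - algebraMap R _ ((a + b) * m)).prod *
      (twoSidedShuffle a b N - algebraMap R _ ((a + b) * (N + 1 : ℕ))) = 0 := by
  set f := fun m : ℕ => twoSidedShuffle a b N - algebraMap R _ ((a + b) * m)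
  set J := fun k => orderFiltration R (Fin (N + 1)) k
  have hcomm (i j : ℕ) : Commute (f i) (f j) :=
    ((Commute.refl _).sub_right (Algebra.commute_algebraMap_right _ _)).sub_left
      (Algebra.commute_algebraMap_left _ _)
  have hstep (k : ℕ) (φ) (hφ : φ ∈ J k) : f k * φ ∈ J (k + 1) :=
    twoSidedShuffle_sub_mul_mem_orderFiltration a b hφ
  have hone : 1 ∈ J 0 := by simp only [J, orderFiltration_zero, Submodule.mem_top]
  have hprod : ((List.range N).map f).prod ∈ J N := by
    rw [← mul_one (List.prod _)]
    exact prod_map_range_smul_mem (J := SetLike.coe ∘ J) hcomm hstep hone N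
  have hskip : J N ≤ J (N + 1) := by
    simpa using orderFiltration_le_orderFiltration_card (R := R) (Fintype.card_fin (N + 1)).le
  have hbot : J (N + 2) = ⊥ := orderFiltration_eq_bot (by simp)
  rw [(commute_prod_map_range hcomm N (N + 1)).eq, ← Submodule.mem_bot R, ← hbot]
  exact hstep (N + 1) _ (hskip hprod)

/-- The two-sided shuffle element satisfies
`E_1·(E_1 − 2)·(E_1 − 4)···(E_1 − (2n−4))·(E_1 − 2n) = 0` in `ℚ[S_n]`
(the factor `(E_1 − (2n−2))` is absent). -/
theorem stmt_8 (n : ℕ) (hn : 2 ≤ n) :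
    ((List.range (n - 1)).map
      (fun m => E1 n - ((2 * m : ℕ) : MonoidAlgebra ℚ (Equiv.Perm (Fin n))))).prod *
      (E1 n - ((2 * n : ℕ) : MonoidAlgebra ℚ (Equiv.Perm (Fin n)))) = 0 := by
  obtain ⟨N, rfl⟩ : ∃ N, n = N + 1 := ⟨n - 1, by omega⟩
  simpa [E1_succ, add_mul, two_mul, -MonoidAlgebra.coe_algebraMap] using stmt_8_general (1 : ℚ) 1 N
end

section
/- For all integers a, b ≥ 1 one has R_a · R_b = R_{ab} in ℚ[S_n]. -/
/-- The number of descents of a permutation `ρ` of `{0,…,n-1}` (0-indexed version of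
`{1,…,n}`): the number of positions `i` with `ρ(i) > ρ(i+1)`, counted as the number of
pairs of consecutive positions `(p₁, p₂)` with `ρ p₂ < ρ p₁`. -/
def des {n : ℕ} (ρ : Equiv.Perm (Fin n)) : ℕ :=
  (Finset.univ.filter
    (fun p : Fin n × Fin n => (p.1 : ℕ) + 1 = (p.2 : ℕ) ∧ ρ p.2 < ρ p.1)).card

/-- The inverse `a`-shuffle element
`R_a := Σ_{ρ ∈ S_n} C(n + a − 1 − des(ρ), n)·ρ ∈ ℚ[S_n]` (with `C(m,n) = 0` for `m < n`). -/
noncomputable def R (n a : ℕ) : MonoidAlgebra ℚ (Equiv.Perm (Fin n)) :=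
  ∑ ρ : Equiv.Perm (Fin n),
    (((n + a - 1 - des ρ).choose n : ℕ) : ℚ) • MonoidAlgebra.of ℚ (Equiv.Perm (Fin n)) ρ

/-!
`R n a` is the sum of the sorting permutations of all labelings of the `n` cards by `a` labels:
a labeling is sorted by `ρ` exactly when its labels, read along `ρ`, increase weakly at the ascents
of `ρ` and strictly at the descents, so adding to each label the number of earlier ascents turns
these labelings into the `n`-element subsets of a set of size `a + asc ρ = n + a - 1 - des ρ`.

Sorting by a labeling `f` and then sorting the new deck by a labeling `g` amounts to a single sort
by pairs of labels, that of `g` being the more significant, and each labeling by pairs arises from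
a unique `(f, g)`.
-/

open Finset Equiv

section ChainCounting

theorem card_filter_strictMono (n : ℕ) (α : Type*) [LinearOrder α] [Fintype α] :
    #{d : Fin n → α | StrictMono d} = (Fintype.card α).choose n := by
  let e : {d : Fin n → α // StrictMono d} ≃ (Fin n ↪o α) :=
    { toFun := fun d ↦ OrderEmbedding.ofStrictMono d d.2
      invFun := fun d ↦ ⟨d, d.strictMono⟩ }
  rw [← Fintype.card_subtype, ← Nat.card_eq_fintype_card, ← Nat.card_eq_fintype_card,
    Nat.card_congr (e.trans Set.powersetCard.ofFinEmbEquiv), Set.powersetCard.card]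

variable {m : ℕ}

theorem monotone_sub_of_succ_le_add_one {d E : Fin (m + 1) → ℕ} (hd : StrictMono d)
    (hE : ∀ k : Fin m, E k.succ ≤ E k.castSucc + 1) : Monotone fun i ↦ (d i : ℤ) - E i := by
  refine Fin.monotone_iff_le_succ.2 fun k ↦ ?_
  have hdk : d k.castSucc < d k.succ := hd k.castSucc_lt_succ
  have hEk := hE k
  lia

theorem card_filter_strictMono_add (a : ℕ) {E : Fin (m + 1) → ℕ} (hE₀ : E 0 = 0)
    (hE : Monotone E) (hE₁ : ∀ k : Fin m, E k.succ ≤ E k.castSucc + 1) :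
    #{c : Fin (m + 1) → Fin a | StrictMono fun i ↦ (c i : ℕ) + E i}
      = (a + E (Fin.last m)).choose (m + 1) := by
  have hbound (c : Fin (m + 1) → Fin a) (i) : (c i : ℕ) + E i < a + E (Fin.last m) :=
    add_lt_add_of_lt_of_le (c i).isLt (hE i.le_last)
  rw [← Fintype.card_fin (a + E (Fin.last m)), ← card_filter_strictMono]
  refine card_bij (fun c _ i ↦ ⟨c i + E i, hbound c i⟩) (fun c hc ↦ ?_) (fun c _ c' _ h ↦ ?_)
    fun d hd ↦ ?_
  · rw [mem_filter_univ] at hc ⊢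
    exact hc
  · ext i
    simpa using congrFun h i
  · have hd : StrictMono fun i ↦ (d i : ℕ) := (mem_filter_univ d).1 hd
    have hmono := monotone_sub_of_succ_le_add_one hd hE₁
    have hlow (i) : E i ≤ d i := by
      have hzero := hmono i.zero_le
      grind
    have hupp (i) : (d i : ℕ) - E i < a := by
      have hlast := hmono i.le_last
      have hlt := (d (Fin.last m)).isLt
      grind
    have hcancel (i) : (d i : ℕ) - E i + E i = d i := Nat.sub_add_cancel (hlow i)
    exact ⟨fun i ↦ ⟨d i - E i, hupp i⟩, by simpa [hcancel] using hd, by ext; simp [hcancel]⟩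

end ChainCounting

section Ascents

variable {m : ℕ} {γ : Type*} [LinearOrder γ]

/-- The ascents of a word `w`, with `k : Fin m` standing for the adjacent positions `k`, `k + 1`. -/
def ascents (w : Fin (m + 1) → γ) : Finset (Fin m) :=
  {k | w k.castSucc < w k.succ}

/-- The number of ascents of `w` to the left of a position: the amount by which a label at that
position is raised in order to make weakly increasing labels strictly increasing. -/
def ascentsBefore (w : Fin (m + 1) → γ) : Fin (m + 1) → ℕ :=
  Fin.partialSum fun k ↦ if w k.castSucc < w k.succ then 1 else 0

theorem ascentsBefore_zero (w : Fin (m + 1) → γ) : ascentsBefore w 0 = 0 :=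
  Fin.partialSum_zero _

theorem ascentsBefore_succ (w : Fin (m + 1) → γ) (k : Fin m) :
    ascentsBefore w k.succ
      = ascentsBefore w k.castSucc + if w k.castSucc < w k.succ then 1 else 0 :=
  Fin.partialSum_succ _ k

theorem ascentsBefore_last (w : Fin (m + 1) → γ) :
    ascentsBefore w (Fin.last m) = #(ascents w) := by
  rw [ascents, card_filter, ← List.sum_ofFn, ascentsBefore, Fin.partialSum,
    List.take_of_length_le (by simp)]

theorem monotone_ascentsBefore (w : Fin (m + 1) → γ) : Monotone (ascentsBefore w) :=
  Fin.monotone_iff_le_succ.2 fun k ↦ by simp [ascentsBefore_succ]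

theorem strictMono_toLex_iff_add_ascentsBefore {a : ℕ} (c : Fin (m + 1) → Fin a)
    (w : Fin (m + 1) → γ) :
    StrictMono (fun i ↦ toLex (c i, w i)) ↔ StrictMono fun i ↦ (c i : ℕ) + ascentsBefore w i := by
  rw [Fin.strictMono_iff_lt_succ, Fin.strictMono_iff_lt_succ]
  refine forall_congr' fun k ↦ ?_
  rw [Prod.Lex.toLex_lt_toLex, ascentsBefore_succ, Fin.lt_def, Fin.ext_iff]
  split_ifs <;> lia

theorem card_filter_strictMono_toLex (a : ℕ) (w : Fin (m + 1) → γ) :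
    #{c : Fin (m + 1) → Fin a | StrictMono fun i ↦ toLex (c i, w i)}
      = (a + #(ascents w)).choose (m + 1) := by
  simp only [strictMono_toLex_iff_add_ascentsBefore]
  rw [card_filter_strictMono_add a (ascentsBefore_zero w) (monotone_ascentsBefore w),
    ascentsBefore_last]
  intro k
  rw [ascentsBefore_succ]
  split_ifs <;> lia

theorem des_eq_card_filter (ρ : Perm (Fin (m + 1))) :
    des ρ = #{k : Fin m | ρ k.succ < ρ k.castSucc} := by
  symm
  refine card_bij (fun k _ ↦ (k.castSucc, k.succ)) (by simp) (by simp) ?_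
  rintro ⟨i, j⟩ hij
  obtain ⟨hadj, hlt⟩ : (i : ℕ) + 1 = j ∧ ρ j < ρ i := by simpa using hij
  obtain ⟨k, rfl⟩ : ∃ k : Fin m, k.castSucc = i := ⟨⟨i, by lia⟩, rfl⟩
  obtain rfl : k.succ = j := Fin.ext hadj
  exact ⟨k, by simpa using hlt, rfl⟩

theorem card_ascents_add_des (ρ : Perm (Fin (m + 1))) : #(ascents ρ) + des ρ = m := by
  have hdesc (k : Fin m) : ρ k.succ < ρ k.castSucc ↔ ¬ρ k.castSucc < ρ k.succ := by
    rw [not_lt, le_iff_lt_or_eq, or_iff_left (ρ.injective.ne k.castSucc_lt_succ.ne')]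
  simp only [des_eq_card_filter, hdesc, ascents, card_filter_add_card_filter_not, card_fin]

end Ascents

section Sorting

variable {n : ℕ} {α β : Type*} [LinearOrder α] [LinearOrder β]

theorem sort_eq_iff_strictMono_toLex {f : Fin n → α} {ρ : Perm (Fin n)} :
    Tuple.sort f = ρ ↔ StrictMono fun i ↦ toLex (f (ρ i), ρ i) := by
  rw [eq_comm, Tuple.eq_sort_iff']
  rfl

theorem strictMono_toLex_sort (f : Fin n → α) :
    StrictMono fun i ↦ toLex (f (Tuple.sort f i), Tuple.sort f i) :=
  sort_eq_iff_strictMono_toLex.1 rfl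

theorem sort_strictMono_comp {e : α → β} (he : StrictMono e) (f : Fin n → α) :
    Tuple.sort (e ∘ f) = Tuple.sort f := by
  simpa [sort_eq_iff_strictMono_toLex, StrictMono, Prod.Lex.toLex_lt_toLex, he.lt_iff_lt,
    he.injective.eq_iff] using strictMono_toLex_sort f

theorem card_filter_sort_eq (n a : ℕ) (ρ : Perm (Fin n)) :
    #{f : Fin n → Fin a | Tuple.sort f = ρ} = (n + a - 1 - des ρ).choose n := by
  cases n with
  | zero => simp [Subsingleton.elim _ ρ]
  | succ m =>
    have hasc : m + 1 + a - 1 - des ρ = a + #(ascents ρ) := by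
      have := card_ascents_add_des ρ
      lia
    rw [hasc, ← card_filter_strictMono_toLex]
    refine card_equiv (ρ.symm.arrowCongr (Equiv.refl _)) fun f ↦ ?_
    simp [sort_eq_iff_strictMono_toLex]

/-- The labeling of the cards equivalent to labeling them by `f`, sorting, and labeling the sorted
deck by `g`: card `x` gets the pair of its `g`-label, read off at its position after the first
sort, and its `f`-label. The `g`-label is the more significant one, as it is sorted by last. -/
def composeLabelings :
    (Fin n → α) × (Fin n → β) ≃ (Fin n → β ×ₗ α) where
  toFun p x := toLex (p.2 ((Tuple.sort p.1).symm x), p.1 x)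
  invFun h :=
    let f := fun x ↦ (ofLex (h x)).2
    (f, fun i ↦ (ofLex (h (Tuple.sort f i))).1)
  left_inv p := by simp
  right_inv h := by simp

theorem sort_composeLabelings (p : (Fin n → α) × (Fin n → β)) :
    Tuple.sort (composeLabelings p) = Tuple.sort p.1 * Tuple.sort p.2 := by
  rw [sort_eq_iff_strictMono_toLex]
  intro i j hij
  have hg := strictMono_toLex_sort p.2 hij
  have hf := strictMono_toLex_sort p.1 (a := Tuple.sort p.2 i) (b := Tuple.sort p.2 j)
  simp only [Prod.Lex.toLex_lt_toLex] at hf hg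
  simp only [composeLabelings, Equiv.coe_fn_mk, Perm.mul_apply, symm_apply_apply,
    Prod.Lex.toLex_lt_toLex, EmbeddingLike.apply_eq_iff_eq, Prod.mk.injEq]
  tauto

end Sorting

section InverseShuffle

variable (k : Type*) [Semiring k] (n : ℕ) (α β : Type*) [LinearOrder α] [Fintype α]
  [LinearOrder β] [Fintype β]

/-- The inverse shuffle of `n` cards with labels in `α`: the sum, over all labelings of the cards,
of the permutation that stably sorts the cards by label. -/
noncomputable def inverseShuffle : MonoidAlgebra k (Perm (Fin n)) :=
  ∑ f : Fin n → α, MonoidAlgebra.of k _ (Tuple.sort f)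

variable {α β} in
theorem inverseShuffle_congr (e : α ≃o β) : inverseShuffle k n α = inverseShuffle k n β :=
  Fintype.sum_equiv ((Equiv.refl _).arrowCongr e.toEquiv) _ _ fun f ↦
    congrArg _ (sort_strictMono_comp e.strictMono f).symm

theorem inverseShuffle_mul_inverseShuffle :
    inverseShuffle k n α * inverseShuffle k n β = inverseShuffle k n (β ×ₗ α) := by
  simp only [inverseShuffle, Fintype.sum_mul_sum, ← Fintype.sum_prod_type',
    ← composeLabelings.sum_comp, sort_composeLabelings, map_mul]

theorem R_eq_inverseShuffle (a : ℕ) : R n a = inverseShuffle ℚ n (Fin a) := by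
  rw [inverseShuffle, ← sum_fiberwise univ Tuple.sort, R]
  refine sum_congr rfl fun ρ _ ↦ ?_
  rw [← card_filter_sort_eq, Nat.cast_smul_eq_nsmul, ← sum_const]
  refine sum_congr rfl fun f hf ↦ ?_
  rw [(mem_filter.1 hf).2]

end InverseShuffle

/-- Multiplicativity of the inverse `a`-shuffles: `R_a · R_b = R_{ab}` in `ℚ[S_n]`. -/
theorem stmt_9 (n : ℕ) (hn : 1 ≤ n) (a b : ℕ) (ha : 1 ≤ a) (hb : 1 ≤ b) :
    R n a * R n b = R n (a * b) := by
  have e : Fin (a * b) ≃o Fin b ×ₗ Fin a :=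
    Fintype.orderIsoFinOfCardEq _ (by simp [mul_comm])
  rw [R_eq_inverseShuffle, R_eq_inverseShuffle, R_eq_inverseShuffle,
    inverseShuffle_mul_inverseShuffle, inverseShuffle_congr ℚ n e]
end

section
/- For every integer a ≥ 1 the inverse a-shuffle element satisfies (R_a − a)·(R_a − a²)·(R_a − a³)···(R_a − a^n) = 0 in ℚ[S_n], where an integer m denotes the scalar m times the identity of the group algebra. -/
/-!
Sorting a word `g : Fin n → α` stably produces a permutation `Tuple.sort g`, and a permutation `ρ`
is produced by exactly `C(n + a - 1 - des ρ, n)` words over an alphabet of size `a`; hence `R_a` is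
the sum of `Tuple.sort g` over all such words. Sorting words over `β ×ₗ α` by radix sort (first by
the `α`-letters, then by the `β`-letters) gives `R_a * R_b = R_{ba}`, so `R_a ^ i = R_{a ^ i}`.
On the other hand, for `n ≥ 1` the coefficients of `R_a` are polynomials in `a` of degree at most
`n` without constant term, so `R_a = ∑_{k = 1}^n a ^ k • E_k` with `E_k` independent of `a`.
Consequently `Q(R_a) = ∑_{k = 1}^n Q(a ^ k) • E_k` for every polynomial `Q`.
-/

section StableSort

variable {n : ℕ} {α β : Type*} [LinearOrder α] [LinearOrder β]

theorem sort_comp_of_strictMono {e : α → β} (he : StrictMono e) (g : Fin n → α) :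
    Tuple.sort (e ∘ g) = Tuple.sort g := by
  obtain ⟨hmono, hstable⟩ := Tuple.eq_sort_iff.1 (rfl : Tuple.sort g = Tuple.sort g)
  exact (Tuple.eq_sort_iff.2
    ⟨he.monotone.comp hmono, fun i j hij h => hstable i j hij (he.injective h)⟩).symm

theorem sort_toLex_prod (h : Fin n → β) (g : Fin n → α) :
    Tuple.sort (fun x => toLex (h x, g x)) = Tuple.sort g * Tuple.sort (h ∘ Tuple.sort g) := by
  set σ := Tuple.sort g with hσ
  set τ := Tuple.sort (h ∘ σ) with hτ
  obtain ⟨gMono, gStable⟩ := Tuple.eq_sort_iff.1 hσ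
  obtain ⟨hMono, hStable⟩ := Tuple.eq_sort_iff.1 hτ
  refine (Tuple.eq_sort_iff.2 ⟨?_, ?_⟩).symm
  · exact monotone_iff_forall_lt.2 fun i j hij => Prod.Lex.toLex_le_toLex'.2
      ⟨hMono hij.le, fun hEq => gMono (hStable i j hij hEq).le⟩
  · intro i j hij hEq
    obtain ⟨hEq, gEq⟩ := Prod.mk.inj (toLex.injective hEq)
    exact gStable _ _ (hStable i j hij hEq) gEq

theorem sort_eq_iff_forall_lt_succ {N : ℕ} {g : Fin (N + 1) → α} {ρ : Equiv.Perm (Fin (N + 1))} :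
    Tuple.sort g = ρ ↔ ∀ j : Fin N, g (ρ j.castSucc) < g (ρ j.succ) ∨
      (g (ρ j.castSucc) = g (ρ j.succ) ∧ ρ j.castSucc < ρ j.succ) := by
  rw [eq_comm, Tuple.eq_sort_iff', Fin.strictMono_iff_lt_succ]
  exact forall_congr' fun j => Prod.Lex.toLex_lt_toLex

end StableSort

section CountingWords

variable {N : ℕ} {s : Fin N → ℕ}

theorem partialSum_le_of_strictMono (hs : ∀ j, s j ≤ 1) {e : Fin (N + 1) → ℕ}
    (he : StrictMono e) (i : Fin (N + 1)) : Fin.partialSum s i ≤ e i := by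
  induction i using Fin.induction with
  | zero => simp
  | succ j ih =>
    have := he j.castSucc_lt_succ
    have := hs j
    rw [Fin.partialSum_succ]
    omega

theorem monotone_sub_partialSum (hs : ∀ j, s j ≤ 1) {e : Fin (N + 1) → ℕ}
    (he : StrictMono e) : Monotone fun i => e i - Fin.partialSum s i := by
  refine Fin.monotone_iff_le_succ.2 fun j => ?_
  have := he j.castSucc_lt_succ
  have := hs j
  rw [Fin.partialSum_succ]
  omega

theorem partialSum_last {M : Type*} [AddCommMonoid M] (f : Fin N → M) :
    Fin.partialSum f (Fin.last N) = ∑ j, f j := by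
  simp [Fin.partialSum, List.take_of_length_le, List.sum_ofFn]

theorem strictMono_add_partialSum_iff {f : Fin (N + 1) → ℕ} :
    StrictMono (fun i => f i + Fin.partialSum s i) ↔
      ∀ j : Fin N, f j.castSucc < f j.succ + s j := by
  refine Fin.strictMono_iff_lt_succ.trans (forall_congr' fun j => ?_)
  rw [Fin.partialSum_succ]
  omega

/-- The usual correspondence between weakly and strictly increasing sequences: adding the partial
sums of `s` makes a sequence which may stall exactly where `s` is `1` strictly increasing. -/
def addPartialSumEquiv {a : ℕ} (hs : ∀ j, s j ≤ 1) :
    {f : Fin (N + 1) → Fin a // ∀ j : Fin N, (f j.castSucc : ℕ) < f j.succ + s j} ≃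
      (Fin (N + 1) ↪o Fin (a + ∑ j, s j)) where
  toFun f :=
    have hstrict := strictMono_add_partialSum_iff.2 f.2
    OrderEmbedding.ofStrictMono
      (fun i => ⟨f.1 i + Fin.partialSum s i, by
        have hle : (f.1 i : ℕ) + Fin.partialSum s i ≤
            f.1 (Fin.last N) + Fin.partialSum s (Fin.last N) := hstrict.monotone i.le_last
        have hlast := (f.1 (Fin.last N)).2
        rw [partialSum_last] at hle
        omega⟩) hstrict
  invFun e :=
    ⟨fun i => ⟨e i - Fin.partialSum s i, by
        have hmono : (e i : ℕ) - Fin.partialSum s i ≤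
            e (Fin.last N) - Fin.partialSum s (Fin.last N) :=
          monotone_sub_partialSum hs e.strictMono i.le_last
        have hle := partialSum_le_of_strictMono hs e.strictMono (Fin.last N)
        have hlast := (e (Fin.last N)).2
        rw [partialSum_last] at hmono hle
        omega⟩,
      (strictMono_add_partialSum_iff (f := fun i => (e i : ℕ) - Fin.partialSum s i)).1 (by
        simp only [Nat.sub_add_cancel (partialSum_le_of_strictMono hs e.strictMono _)]
        exact e.strictMono)⟩
  left_inv f := Subtype.ext <| funext fun i => Fin.ext <| Nat.add_sub_cancel ..
  right_inv e := DFunLike.ext _ _ fun i => Fin.ext <|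
    Nat.sub_add_cancel (partialSum_le_of_strictMono hs e.strictMono i)

theorem card_orderEmbedding_fin (k m : ℕ) : Nat.card (Fin k ↪o Fin m) = m.choose k := by
  rw [Nat.card_congr Set.powersetCard.ofFinEmbEquiv, Set.powersetCard.card, Nat.card_fin]

theorem card_forall_lt_add (hs : ∀ j, s j ≤ 1) (a : ℕ) :
    Nat.card {f : Fin (N + 1) → Fin a // ∀ j : Fin N, (f j.castSucc : ℕ) < f j.succ + s j} =
      (a + ∑ j, s j).choose (N + 1) := by
  rw [Nat.card_congr (addPartialSumEquiv hs), card_orderEmbedding_fin]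

theorem des_eq_card_filter_succ_lt (ρ : Equiv.Perm (Fin (N + 1))) :
    des ρ = (Finset.univ.filter fun j : Fin N => ρ j.succ < ρ j.castSucc).card := by
  symm
  refine Finset.card_bij (fun j _ => (j.castSucc, j.succ)) ?_ ?_ ?_
  · simp
  · simp
  · rintro ⟨p, q⟩ hpq
    obtain ⟨hsucc, hlt⟩ := (Finset.mem_filter.1 hpq).2
    obtain ⟨j, rfl⟩ : ∃ j : Fin N, j.castSucc = p := ⟨⟨p, by have := q.2; lia⟩, rfl⟩
    obtain rfl : j.succ = q := Fin.ext hsucc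
    exact ⟨j, by simpa using hlt, rfl⟩

theorem des_add_card_ascents (ρ : Equiv.Perm (Fin (N + 1))) :
    des ρ + (Finset.univ.filter fun j : Fin N => ρ j.castSucc < ρ j.succ).card = N := by
  have ne_succ (j : Fin N) : ρ j.castSucc ≠ ρ j.succ := ρ.injective.ne j.castSucc_lt_succ.ne
  have lt_succ_iff (j : Fin N) : ρ j.castSucc < ρ j.succ ↔ ¬ ρ j.succ < ρ j.castSucc :=
    ⟨fun h => h.asymm, fun h => (not_lt.1 h).lt_of_ne (ne_succ j)⟩
  simp only [des_eq_card_filter_succ_lt, lt_succ_iff, Finset.card_filter_add_card_filter_not,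
    Finset.card_univ, Fintype.card_fin]

theorem des_lt {n : ℕ} (hn : 1 ≤ n) (ρ : Equiv.Perm (Fin n)) : des ρ < n := by
  obtain ⟨N, rfl⟩ := Nat.exists_eq_add_of_le' hn
  have := des_add_card_ascents ρ
  omega

theorem card_sort_eq {n : ℕ} (a : ℕ) (ρ : Equiv.Perm (Fin n)) :
    (Finset.univ.filter fun g : Fin n → Fin a => Tuple.sort g = ρ).card =
      (n + a - 1 - des ρ).choose n := by
  cases n with
  | zero => simp [Subsingleton.elim _ ρ]
  | succ N =>
    let s (j : Fin N) : ℕ := if ρ j.castSucc < ρ j.succ then 1 else 0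
    have hs (j : Fin N) : s j ≤ 1 := by dsimp only [s]; split_ifs <;> simp
    have sort_iff (g : Fin (N + 1) → Fin a) : Tuple.sort g = ρ ↔
        ∀ j : Fin N, ((g ∘ ρ) j.castSucc : ℕ) < (g ∘ ρ) j.succ + s j := by
      refine sort_eq_iff_forall_lt_succ.trans (forall_congr' fun j => ?_)
      simp only [s, Function.comp_apply, Fin.lt_def, Fin.ext_iff]
      split_ifs <;> omega
    have sum_s : a + ∑ j, s j = N + 1 + a - 1 - des ρ := by
      have := des_add_card_ascents ρ
      rw [← Finset.card_filter]
      omega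
    rw [← Fintype.card_subtype, ← Nat.card_eq_fintype_card, ← sum_s, ← card_forall_lt_add hs]
    exact Nat.card_congr ((Equiv.arrowCongr ρ.symm (Equiv.refl _)).subtypeEquiv sort_iff)

end CountingWords

section ShuffleAlgebra

open MonoidAlgebra

variable (n : ℕ)

theorem R_eq_sum_sort_fin (a : ℕ) :
    R n a = ∑ g : Fin n → Fin a, of ℚ (Equiv.Perm (Fin n)) (Tuple.sort g) := by
  rw [R, ← Finset.sum_fiberwise (s := Finset.univ) (g := fun g : Fin n → Fin a => Tuple.sort g)]
  refine Finset.sum_congr rfl fun ρ _ => ?_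
  rw [← card_sort_eq, Nat.cast_smul_eq_nsmul, ← Finset.sum_const]
  exact Finset.sum_congr rfl fun g hg => by rw [(Finset.mem_filter.1 hg).2]

theorem R_card_eq_sum_sort (α : Type*) [LinearOrder α] [Fintype α] :
    R n (Fintype.card α) = ∑ g : Fin n → α, of ℚ (Equiv.Perm (Fin n)) (Tuple.sort g) := by
  let e : Fin (Fintype.card α) ≃o α := Fintype.orderIsoFinOfCardEq α rfl
  rw [R_eq_sum_sort_fin]
  exact Fintype.sum_equiv (Equiv.arrowCongr (Equiv.refl _) e.toEquiv) _ _ fun g =>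
    congrArg _ (sort_comp_of_strictMono e.strictMono g).symm

theorem R_one : R n 1 = 1 := by
  have hsort : Tuple.sort (default : Fin n → Fin 1) = 1 :=
    Tuple.sort_eq_refl_iff_monotone.2 monotone_const
  rw [R_eq_sum_sort_fin, Fintype.sum_unique, hsort, map_one]

theorem R_mul_R (a b : ℕ) : R n a * R n b = R n (b * a) := by
  have hcard : b * a = Fintype.card (Fin b ×ₗ Fin a) := by
    rw [Fintype.card_lex, Fintype.card_prod, Fintype.card_fin, Fintype.card_fin]
  let e : (Fin n → Fin b ×ₗ Fin a) ≃ (Fin n → Fin b) × (Fin n → Fin a) :=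
    Equiv.arrowProdEquivProdArrow (Fin n) (fun _ => Fin b) (fun _ => Fin a)
  symm
  calc R n (b * a)
      = ∑ k : Fin n → Fin b ×ₗ Fin a, of ℚ (Equiv.Perm (Fin n)) (Tuple.sort k) := by
        rw [hcard, R_card_eq_sum_sort]
    _ = ∑ g : Fin n → Fin a, ∑ h : Fin n → Fin b,
          of ℚ (Equiv.Perm (Fin n)) (Tuple.sort fun x => toLex (h x, g x)) := by
        rw [← Fintype.sum_prod_type_right', ← e.symm.sum_comp]
        rfl
    _ = ∑ g : Fin n → Fin a, ∑ h : Fin n → Fin b,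
          of ℚ (Equiv.Perm (Fin n)) (Tuple.sort g * Tuple.sort (h ∘ Tuple.sort g)) := by
        simp only [sort_toLex_prod]
    _ = ∑ g : Fin n → Fin a, ∑ h : Fin n → Fin b,
          of ℚ (Equiv.Perm (Fin n)) (Tuple.sort g * Tuple.sort h) :=
        Finset.sum_congr rfl fun g _ =>
          (Equiv.arrowCongr (Tuple.sort g).symm (Equiv.refl (Fin b))).sum_comp fun h =>
            of ℚ (Equiv.Perm (Fin n)) (Tuple.sort g * Tuple.sort h)
    _ = R n a * R n b := by
        simp only [R_eq_sum_sort_fin, Finset.sum_mul_sum, map_mul]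

theorem R_pow_eq (a i : ℕ) : R n a ^ i = R n (a ^ i) := by
  induction i with
  | zero => rw [pow_zero, pow_zero, R_one]
  | succ i ih => rw [pow_succ', ih, R_mul_R, pow_succ]

end ShuffleAlgebra

section EulerianExpansion

open Polynomial

section BinomialPoly

variable (K : Type*) [Field K]

/-- The polynomial `C(X + m, n)` in `X`. Its values at `X = a` for `m = n - 1 - des ρ` are the
coefficients of `R n a`. -/
noncomputable def binomialPoly (n m : ℕ) : K[X] :=
  C ((n.factorial : K)⁻¹) * (descPochhammer K n).comp (X + C (m : K))

theorem binomialPoly_eval_natCast [CharZero K] (n m a : ℕ) :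
    (binomialPoly K n m).eval (a : K) = ((a + m).choose n : ℕ) := by
  simp [binomialPoly, Nat.cast_choose_eq_descPochhammer_div, div_eq_inv_mul]

theorem natDegree_binomialPoly_le (n m : ℕ) : (binomialPoly K n m).natDegree ≤ n := by
  refine (natDegree_C_mul_le _ _).trans ?_
  rw [natDegree_comp, descPochhammer_natDegree, natDegree_X_add_C, mul_one]

theorem binomialPoly_coeff_zero [CharZero K] {n m : ℕ} (hmn : m < n) :
    (binomialPoly K n m).coeff 0 = 0 := by
  rw [coeff_zero_eq_eval_zero, ← Nat.cast_zero, binomialPoly_eval_natCast, zero_add,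
    Nat.choose_eq_zero_of_lt hmn, Nat.cast_zero]

theorem choose_add_eq_sum_coeff_binomialPoly [CharZero K] {n m : ℕ} (hmn : m < n) (a : ℕ) :
    ((a + m).choose n : K) = ∑ k ∈ Finset.Icc 1 n, (binomialPoly K n m).coeff k * (a : K) ^ k := by
  rw [← binomialPoly_eval_natCast,
    eval_eq_sum_range' (Nat.lt_succ_of_le (natDegree_binomialPoly_le K n m)),
    Finset.sum_range_eq_add_Ico _ n.succ_pos, binomialPoly_coeff_zero K hmn, zero_mul, zero_add,
    Nat.succ_eq_add_one, Finset.Ico_add_one_right_eq_Icc]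

end BinomialPoly

/-- The coefficient of `a ^ k` in the inverse `a`-shuffle element `R n a`, which depends
polynomially on `a`. For `1 ≤ k ≤ n` these are the Eulerian idempotents of `ℚ[S_n]`. -/
noncomputable def eulerianElement (n k : ℕ) : MonoidAlgebra ℚ (Equiv.Perm (Fin n)) :=
  ∑ ρ : Equiv.Perm (Fin n),
    (binomialPoly ℚ n (n - 1 - des ρ)).coeff k • MonoidAlgebra.of ℚ (Equiv.Perm (Fin n)) ρ

theorem R_eq_sum_pow_smul_eulerianElement {n : ℕ} (hn : 1 ≤ n) (a : ℕ) :
    R n a = ∑ k ∈ Finset.Icc 1 n, (a : ℚ) ^ k • eulerianElement n k := by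
  simp only [R, eulerianElement, Finset.smul_sum, smul_smul]
  rw [Finset.sum_comm]
  refine Finset.sum_congr rfl fun ρ _ => ?_
  have hdes := des_lt hn ρ
  have hshift : n + a - 1 - des ρ = a + (n - 1 - des ρ) := by omega
  rw [hshift, choose_add_eq_sum_coeff_binomialPoly ℚ (by omega), Finset.sum_smul]
  simp only [mul_comm]

theorem aeval_R {n : ℕ} (hn : 1 ≤ n) (a : ℕ) (Q : ℚ[X]) :
    aeval (R n a) Q = ∑ k ∈ Finset.Icc 1 n, Q.eval ((a : ℚ) ^ k) • eulerianElement n k := by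
  calc aeval (R n a) Q
      = ∑ i ∈ Finset.range (Q.natDegree + 1), ∑ k ∈ Finset.Icc 1 n,
          (Q.coeff i * ((a : ℚ) ^ k) ^ i) • eulerianElement n k := by
        simp only [aeval_eq_sum_range, R_pow_eq]
        simp only [R_eq_sum_pow_smul_eulerianElement hn, Finset.smul_sum, smul_smul, Nat.cast_pow,
          pow_right_comm _ _]
    _ = ∑ k ∈ Finset.Icc 1 n, Q.eval ((a : ℚ) ^ k) • eulerianElement n k := by
        rw [Finset.sum_comm]
        simp only [eval_eq_sum_range, Finset.sum_smul]

end EulerianExpansion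

/-- For every `a ≥ 1`, `(R_a − a)·(R_a − a²)···(R_a − a^n) = 0` in `ℚ[S_n]`,
integers denoting scalar multiples of the identity of the group algebra. -/
theorem stmt_10 (n : ℕ) (hn : 1 ≤ n) (a : ℕ) (ha : 1 ≤ a) :
    ((List.range n).map
      (fun i => R n a - ((a ^ (i + 1) : ℕ) : MonoidAlgebra ℚ (Equiv.Perm (Fin n))))).prod
      = 0 := by
  let Q : Polynomial ℚ :=
    ((List.range n).map fun i => Polynomial.X - Polynomial.C ((a : ℚ) ^ (i + 1))).prod
  have hroot : ∀ k ∈ Finset.Icc 1 n, Q.eval ((a : ℚ) ^ k) = 0 := by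
    intro k hk
    obtain ⟨hk1, hkn⟩ := Finset.mem_Icc.1 hk
    rw [Polynomial.eval_list_prod]
    refine List.prod_eq_zero (List.mem_map.2 ⟨_, List.mem_map.2 ⟨k - 1, ?_, rfl⟩, ?_⟩)
    · exact List.mem_range.2 (by omega)
    · simp [Nat.sub_add_cancel hk1]
  calc _ = Polynomial.aeval (R n a) Q := by simp [Q, map_list_prod, Function.comp_def]
    _ = ∑ k ∈ Finset.Icc 1 n, Q.eval ((a : ℚ) ^ k) • eulerianElement n k := aeval_R hn a Q
    _ = 0 := Finset.sum_eq_zero fun k hk => by rw [hroot k hk, zero_smul]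
end

section
/- Let H_n be the hyperoctahedral group of signed permutations, realized as the group of permutations π of {1,…,n} × {+1,−1} satisfying π(i,−s) = −π(i,s) (where −(p,t) := (p,−t)). For each p ∈ {1,…,n} and ε ∈ {+1,−1} let π_{p,ε} ∈ H_n be the element with π_{p,ε}(p, s) = (1, ε·s), π_{p,ε}(i, s) = (i+1, s) for i < p, and π_{p,ε}(i, s) = (i, s) for i > p. Set F_1 := Σ_{p=1}^{n} Σ_{ε ∈ {+1,−1}} π_{p,ε} ∈ ℚ[H_n]. Then F_1·(F_1 − 2)·(F_1 − 4)···(F_1 − (2n−2))·(F_1 − 2n) = 0 in the group algebra ℚ[H_n], i.e. the product of the factors (F_1 − 2i) over i = 0,1,…,n vanishes. -/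
/-!
Label the signed cards of a deck by `q = (i, e)`, with `i` the card and `e` one of its signs, and
let `x q` be the operator on the group algebra that brings the card `i` to the top of every deck,
with sign `e`. Multiplication by `F₁` is `X = ∑ q, x q`. Moving a card that is going to be moved
again later has no lasting effect, so `x q * x r * x q = x q * x r`, and `x q * x q' = x q` whenever
`q` and `q'` belong to the same card. Hence, if `a` is a product of operators `x q` that involves
exactly the cards of a set `S` of size `k`, then `a * x q = a` for the `2 * k` signed cards `q` over
`S`, and `a * (X - 2 * k)` is the sum of the `a * x q` over the other signed cards. Each of these
products involves `k + 1` cards, so multiplying `1` by `X - 2 * k` for `k = 0, …, n` in turn uses up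
all the cards and gives zero.
-/

section Absorption

variable {ι κ A : Type*} [Ring A]

theorem mul_sum_sub_card_eq_sum_of_absorbs [Fintype ι] [Fintype κ] [DecidableEq ι]
    (x : ι × κ → A) {a : A} {S : Finset ι} (ha : ∀ q, q.1 ∈ S → a * x q = a) :
    a * (∑ q, x q - ((Fintype.card κ * S.card : ℕ) : A)) = ∑ q with q.1 ∉ S, a * x q := by
  have hcard : (Finset.univ.filter fun q : ι × κ => q.1 ∈ S).card = Fintype.card κ * S.card := by
    rw [show (Finset.univ.filter fun q : ι × κ => q.1 ∈ S) = S ×ˢ Finset.univ by ext; simp,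
      Finset.card_product, Finset.card_univ, mul_comm]
  have habsorbed : ∑ q with q.1 ∈ S, a * x q = a * ((Fintype.card κ * S.card : ℕ) : A) := by
    rw [Finset.sum_congr rfl fun q hq => ha q (Finset.mem_filter.1 hq).2, Finset.sum_const, hcard,
      nsmul_eq_mul, (Nat.cast_commute _ a).eq]
  rw [mul_sub, Finset.mul_sum, ← Finset.sum_filter_add_sum_filter_not _ fun q : ι × κ => q.1 ∈ S,
    habsorbed, add_sub_cancel_left]

variable {x : ι × κ → A} (hsame : ∀ q q', q.1 = q'.1 → x q * x q' = x q)
  (hband : ∀ q r, x q * x r * x q = x q * x r)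

include hsame hband

theorem mul_absorbs_insert [DecidableEq ι] {a : A} {S : Finset ι}
    (ha : ∀ q, q.1 ∈ S → a * x q = a) (r : ι × κ) :
    ∀ q, q.1 ∈ insert r.1 S → a * x r * x q = a * x r := by
  intro q hq
  rcases Finset.mem_insert.1 hq with hqr | hqS
  · rw [mul_assoc, hsame r q hqr.symm]
  · calc a * x r * x q = a * (x q * x r * x q) := by rw [← mul_assoc, ← mul_assoc, ha q hqS]
      _ = a * x r := by rw [hband, ← mul_assoc, ha q hqS]

variable [Fintype ι] [Fintype κ]

theorem mul_prod_range'_sub_eq_zero_of_absorbs {a : A} {S : Finset ι}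
    (ha : ∀ q, q.1 ∈ S → a * x q = a) {m : ℕ} (hm : S.card + m = Fintype.card ι + 1) :
    a * ((List.range' S.card m).map
      fun k => ∑ q, x q - ((Fintype.card κ * k : ℕ) : A)).prod = 0 := by
  classical
  induction m generalizing a S with
  | zero => have := S.card_le_univ; omega
  | succ m ih =>
    rw [List.range'_succ, List.map_cons, List.prod_cons, ← mul_assoc,
      mul_sum_sub_card_eq_sum_of_absorbs x ha, Finset.sum_mul]
    refine Finset.sum_eq_zero fun q hq => ?_
    have hcard : (insert q.1 S).card = S.card + 1 :=
      Finset.card_insert_of_notMem (Finset.mem_filter.1 hq).2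
    rw [← hcard]
    exact ih (mul_absorbs_insert hsame hband ha q) (by omega)

theorem prod_range_sum_sub_eq_zero :
    ((List.range (Fintype.card ι + 1)).map
      fun k => ∑ q, x q - ((Fintype.card κ * k : ℕ) : A)).prod = 0 := by
  simpa [List.range_eq_range'] using
    mul_prod_range'_sub_eq_zero_of_absorbs (a := 1) (S := ∅) hsame hband (by simp)
      (Nat.zero_add _)

end Absorption

section GroupAlgebra

open MonoidAlgebra

variable {Γ Q : Type*} [Group Γ] [MulAction Γ Q]

/-- The additive extension of self-maps of `α` to `R[α]`. -/
noncomputable def mapDomainEnd (R α : Type*) [Semiring R] :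
    Function.End α →* AddMonoid.End (MonoidAlgebra R α) where
  toFun f :=
    { toFun := mapDomain f
      map_zero' := mapDomain_zero f
      map_add' := mapDomain_add f }
  map_one' := addMonoidHom_ext fun _ _ => mapDomain_single
  map_mul' f g := addMonoidHom_ext fun _ _ => (mapDomain_single (f := f ∘ g)).trans
    ((congrArg (mapDomain f) mapDomain_single).trans mapDomain_single).symm

theorem mapDomainEnd_single {R α : Type*} [Semiring R] (f : Function.End α) (v : α) (r : R) :
    mapDomainEnd R α f (single v r) = single (f v) r :=
  mapDomain_single

/-- If `v` sends a label to its place in a deck and `t p` moves the content of the place `p` to the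
top, then `moveLabel t q` moves the content labelled `q` to the top of every deck. -/
def moveLabel (t : Q → Γ) (q : Q) : Function.End Γ := fun v => t (v • q) * v

theorem sum_mapDomainEnd_moveLabel (R : Type*) [Semiring R] [Fintype Q] (t : Q → Γ) :
    ∑ q, mapDomainEnd R Γ (moveLabel t q) = Module.toAddMonoidEnd _ _ (∑ q, of R Γ (t q)) := by
  refine addMonoidHom_ext fun v r => ?_
  calc (∑ q, mapDomainEnd R Γ (moveLabel t q)) (single v r) = ∑ q, single (t (v • q) * v) r :=
        (AddMonoidHom.finsetSum_apply ..).trans <|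
          Finset.sum_congr rfl fun q _ => mapDomainEnd_single _ v r
    _ = ∑ q, single (t q * v) r :=
        Equiv.sum_comp (MulAction.toPerm v) fun q => single (t q * v) r
    _ = (∑ q, of R Γ (t q)) * single v r := by
        simp only [Finset.sum_mul, of_apply, single_mul_single, one_mul]

theorem prod_range_sum_of_sub_eq_zero (R : Type*) [Ring R] {ι κ : Type*} [Fintype ι] [Fintype κ]
    [MulAction Γ (ι × κ)] {t : ι × κ → Γ}
    (hfiber : ∀ (v : Γ) (q q' : ι × κ), q.1 = q'.1 → (v • q).1 = (v • q').1)
    (hsame : ∀ q q', q.1 = q'.1 → t (t q' • q) * t q' = t q)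
    (hband : ∀ q r, t ((t (t q • r) * t q) • q) * (t (t q • r) * t q) = t (t r • q) * t r) :
    ((List.range (Fintype.card ι + 1)).map
      fun k => ∑ q, of R Γ (t q) - ((Fintype.card κ * k : ℕ) : MonoidAlgebra R Γ)).prod = 0 := by
  have moveLabel_same (q q' : ι × κ) (h : q.1 = q'.1) :
      moveLabel t q * moveLabel t q' = moveLabel t q := by
    funext v
    change t ((t (v • q') * v) • q) * (t (v • q') * v) = t (v • q) * v
    rw [mul_smul, ← mul_assoc, hsame _ _ (hfiber v q q' h)]
  have moveLabel_band (q r : ι × κ) :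
      moveLabel t q * moveLabel t r * moveLabel t q = moveLabel t q * moveLabel t r := by
    funext v
    change t ((t ((t (v • q) * v) • r) * (t (v • q) * v)) • q) *
      (t ((t (v • q) * v) • r) * (t (v • q) * v)) = t ((t (v • r) * v) • q) * (t (v • r) * v)
    simpa only [mul_smul, mul_assoc] using congrArg (· * v) (hband (v • q) (v • r))
  have hzero := prod_range_sum_sub_eq_zero
    (x := fun q => mapDomainEnd R Γ (moveLabel t q))
    (fun q q' h => by rw [← map_mul, moveLabel_same q q' h])
    (fun q r => by simp only [← map_mul, moveLabel_band])
  have hleft : Module.toAddMonoidEnd (MonoidAlgebra R Γ) (MonoidAlgebra R Γ)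
      ((List.range (Fintype.card ι + 1)).map fun k =>
        ∑ q, of R Γ (t q) - ((Fintype.card κ * k : ℕ) : MonoidAlgebra R Γ)).prod = 0 := by
    simpa only [sum_mapDomainEnd_moveLabel, map_list_prod, List.map_map, Function.comp_def,
      map_sub, map_natCast] using hzero
  exact (mul_one _).symm.trans (DFunLike.congr_fun hleft 1)

end GroupAlgebra

section ColoredDecks

/-- The permutations of `ι × κ` that permute the fibres of the projection to `ι`. For `ι = Fin n`
and `κ = {+1, −1}` this is the hyperoctahedral group. -/
def fiberPerm (ι κ : Type*) : Subgroup (Equiv.Perm (ι × κ)) where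
  carrier := {v | ∀ q q', (v q).1 = (v q').1 ↔ q.1 = q'.1}
  one_mem' := fun _ _ => Iff.rfl
  mul_mem' := fun hv hw q q' => (hv _ _).trans (hw q q')
  inv_mem' := fun {v} hv q q' => by simpa using (hv (v⁻¹ q) (v⁻¹ q')).symm

variable {n : ℕ}

theorem val_cycleRange (p i : Fin n) :
    (p.cycleRange i : ℕ) = if i < p then (i : ℕ) + 1 else if i = p then 0 else i := by
  rcases lt_trichotomy i p with h | rfl | h
  · simp [h, Fin.coe_cycleRange_of_lt h]
  · simp [Fin.coe_cycleRange_of_le le_rfl]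
  · simp [h.not_gt, h.ne', Fin.cycleRange_of_gt h]

theorem cycleRange_cycleRange_self (p : Fin n) : (p.cycleRange p).cycleRange = 1 := by
  ext i
  simp only [val_cycleRange, Fin.lt_def, Fin.ext_iff, Equiv.Perm.one_apply]
  grind

-- The final position of card `i` when cards `p`, `q`, `p`, or only `q`, `p`, are moved to the top.
theorem cycleRange_cycleRange_cycleRange (p q i : Fin n) :
    ((p.cycleRange q).cycleRange (p.cycleRange p)).cycleRange
      ((p.cycleRange q).cycleRange (p.cycleRange i)) =
      (q.cycleRange p).cycleRange (q.cycleRange i) := by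
  ext
  simp only [val_cycleRange, Fin.lt_def, Fin.ext_iff]
  grind

variable {G : Type*} [Group G]

/-- The permutation `π_{p,ε}` that moves the card in position `p` to the top of a deck of cards
coloured by `G`, multiplying its colour by `ε`. -/
def moveToTop (p : Fin n) (ε : G) : Equiv.Perm (Fin n × G) :=
  Equiv.prodShear p.cycleRange (Pi.mulSingle p (Equiv.mulLeft ε))

theorem moveToTop_apply (p : Fin n) (ε : G) (i : Fin n) (s : G) :
    moveToTop p ε (i, s) = (p.cycleRange i, if i = p then ε * s else s) := by
  by_cases h : i = p <;> simp [moveToTop, h]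

theorem eq_moveToTop {σ : Equiv.Perm (Fin n × G)} {p : Fin n} {ε : G}
    (htop : ∀ s, σ (p, s) = (⟨0, p.pos⟩, ε * s))
    (hlt : ∀ (i : Fin n) (s : G) (h : (i : ℕ) < p),
      σ (i, s) = (⟨(i : ℕ) + 1, lt_of_le_of_lt h p.isLt⟩, s))
    (hgt : ∀ (i : Fin n) (s : G), (p : ℕ) < i → σ (i, s) = (i, s)) :
    σ = moveToTop p ε := by
  ext1 ⟨i, s⟩
  rw [moveToTop_apply]
  rcases lt_trichotomy i p with h | rfl | h
  · rw [hlt i s h, if_neg h.ne]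
    exact Prod.ext (Fin.ext (Fin.coe_cycleRange_of_lt h).symm) rfl
  · rw [htop, if_pos rfl]
    exact Prod.ext (Fin.ext (by simp [val_cycleRange])) rfl
  · rw [hgt i s h, if_neg h.ne', Fin.cycleRange_of_gt h]

theorem moveToTop_mem_fiberPerm (p : Fin n) (ε : G) : moveToTop p ε ∈ fiberPerm (Fin n) G :=
  fun q q' => by simp [moveToTop]

/-- The element of the group of coloured decks that brings the card in position `q.1` to the top,
changing the colour `q.2` to `1`: the permutations `π_{p,ε}`, indexed by coloured positions, on
which the group acts. -/
def faceToTop (q : Fin n × G) : fiberPerm (Fin n) G :=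
  ⟨moveToTop q.1 q.2⁻¹, moveToTop_mem_fiberPerm q.1 q.2⁻¹⟩

theorem faceToTop_smul (q r : Fin n × G) :
    faceToTop q • r = (q.1.cycleRange r.1, if r.1 = q.1 then q.2⁻¹ * r.2 else r.2) :=
  moveToTop_apply q.1 q.2⁻¹ r.1 r.2

theorem faceToTop_mul_of_fst_eq {q q' : Fin n × G} (h : q.1 = q'.1) :
    faceToTop (faceToTop q' • q) * faceToTop q' = faceToTop q := by
  refine eq_of_smul_eq_smul fun r : Fin n × G => ?_
  simp only [mul_smul, faceToTop_smul, h]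
  ext
  · simp [cycleRange_cycleRange_self]
  · by_cases hr : r.1 = q'.1 <;> simp [hr, mul_assoc]

theorem faceToTop_band (q r : Fin n × G) :
    faceToTop ((faceToTop (faceToTop q • r) * faceToTop q) • q) *
      (faceToTop (faceToTop q • r) * faceToTop q) = faceToTop (faceToTop r • q) * faceToTop r := by
  refine eq_of_smul_eq_smul fun i : Fin n × G => ?_
  simp only [mul_smul, faceToTop_smul]
  refine Prod.ext (cycleRange_cycleRange_cycleRange q.1 r.1 i.1) ?_
  by_cases hi : i.1 = q.1 <;> by_cases hr : i.1 = r.1 <;> by_cases hq : q.1 = r.1 <;>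
    simp_all [mul_assoc]

end ColoredDecks

theorem stmt_13_general (R : Type*) [Ring R] {G : Type*} [Group G] [Fintype G] (n : ℕ)
    (π : Fin n → G → Equiv.Perm (Fin n × G))
    (htop : ∀ (p : Fin n) (ε s : G), π p ε (p, s) = (⟨0, p.pos⟩, ε * s))
    (hlt : ∀ (p : Fin n) (ε : G) (i : Fin n) (s : G) (h : (i : ℕ) < (p : ℕ)),
      π p ε (i, s) = (⟨(i : ℕ) + 1, lt_of_le_of_lt h p.isLt⟩, s))
    (hgt : ∀ (p : Fin n) (ε : G) (i : Fin n) (s : G), (p : ℕ) < (i : ℕ) →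
      π p ε (i, s) = (i, s)) :
    ((List.range (n + 1)).map
      (fun i => (∑ p : Fin n, ∑ ε : G, MonoidAlgebra.of R (Equiv.Perm (Fin n × G)) (π p ε))
        - ((Fintype.card G * i : ℕ) : MonoidAlgebra R (Equiv.Perm (Fin n × G))))).prod = 0 := by
  have hfiber (v : fiberPerm (Fin n) G) (q q' : Fin n × G) (h : q.1 = q'.1) :
      (v • q).1 = (v • q').1 := (v.2 q q').2 h
  have hzero := prod_range_sum_of_sub_eq_zero R hfiber
    (fun _ _ => faceToTop_mul_of_fst_eq) faceToTop_band
  have hF : MonoidAlgebra.mapDomainRingHom R (fiberPerm (Fin n) G).subtype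
      (∑ q, MonoidAlgebra.of R _ (faceToTop q)) = ∑ p, ∑ ε, MonoidAlgebra.of R _ (π p ε) := by
    rw [map_sum, Fintype.sum_prod_type]
    refine Finset.sum_congr rfl fun p _ => ?_
    rw [← Equiv.sum_comp (Equiv.inv G)]
    refine Finset.sum_congr rfl fun ε _ => ?_
    rw [eq_moveToTop (htop p ε) (hlt p ε) (hgt p ε)]
    simp [faceToTop]
  simpa only [map_list_prod, List.map_map, Function.comp_def, map_sub, map_natCast, hF,
    Fintype.card_fin, map_zero] using
    congrArg (MonoidAlgebra.mapDomainRingHom R (fiberPerm (Fin n) G).subtype) hzero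

/-- The hyperoctahedral group `H_n` is realized inside the permutations of
`Fin n × ℤˣ` (positions `{1,…,n}`, 0-indexed, times signs `{+1,−1}`), as those `π` with
`π(i,−s) = −π(i,s)`.  The elements `π p ε` below (remove the card in position `p` and
put it on top with sign `ε`) are pinned down by the hypotheses: `π p ε` sends `(p, s)`
to `(1, ε·s)` (0-indexed: position `0`), sends `(i, s)` to `(i+1, s)` for `i < p`, and
fixes `(i, s)` for `i > p`; these automatically lie in `H_n`.  With
`F_1 := Σ_{p} Σ_{ε} π_{p,ε}` in the group algebra, one has
`F_1·(F_1 − 2)·(F_1 − 4)···(F_1 − (2n−2))·(F_1 − 2n) = 0`, i.e. the product of the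
factors `(F_1 − 2i)` over `i = 0,1,…,n` vanishes (integers denote scalar multiples of
the identity of the group algebra; the identity holds equivalently in `ℚ[H_n]` since
`ℚ[H_n]` embeds in the group algebra used here). -/
theorem stmt_13 (n : ℕ)
    (π : Fin n → ℤˣ → Equiv.Perm (Fin n × ℤˣ))
    (hsigned : ∀ (p : Fin n) (ε : ℤˣ) (i : Fin n) (s : ℤˣ),
      π p ε (i, -s) = ((π p ε (i, s)).1, -(π p ε (i, s)).2))
    (htop : ∀ (p : Fin n) (ε s : ℤˣ), π p ε (p, s) = (⟨0, p.pos⟩, ε * s))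
    (hlt : ∀ (p : Fin n) (ε : ℤˣ) (i : Fin n) (s : ℤˣ) (h : (i : ℕ) < (p : ℕ)),
      π p ε (i, s) = (⟨(i : ℕ) + 1, lt_of_le_of_lt h p.isLt⟩, s))
    (hgt : ∀ (p : Fin n) (ε : ℤˣ) (i : Fin n) (s : ℤˣ), (p : ℕ) < (i : ℕ) →
      π p ε (i, s) = (i, s)) :
    ((List.range (n + 1)).map
      (fun i => (∑ p : Fin n, ∑ ε : ℤˣ, MonoidAlgebra.of ℚ (Equiv.Perm (Fin n × ℤˣ)) (π p ε))
        - ((2 * i : ℕ) : MonoidAlgebra ℚ (Equiv.Perm (Fin n × ℤˣ))))).prod = 0 := by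
  simpa only [Fintype.card_units_int] using stmt_13_general ℚ n π htop hlt hgt
end
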